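/- arXiv:1403.4861 — 2 statements merged into one kernel-verified Lean document; each statement's English description precedes it below -/
import Mathlib

section
/- Let G' be a graph on n' vertices containing a perfect matching M, and suppose the graph G* = (V', E* \ M) is planar, where E* is any edge set on V' with |E*| = OPT. If M'' is a maximum matching of (V', E' \ M) for some E' ⊇ E*, then OPT ≤ 3|M''| + 5|M| ≤ 5|M ∪ M''|. -/
open SimpleGraph

/-- `H` is a minor of `G`. -/
def SimpleGraph.HasMinor {V W : Type*} (G : SimpleGraph V) (H : SimpleGraph W) : Prop :=
  ∃ f : W → Set V,
    (∀ w, (f w).Nonempty) ∧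
    (∀ w, (G.induce (f w)).Connected) ∧
    (Pairwise fun w₁ w₂ => Disjoint (f w₁) (f w₂)) ∧
    (∀ w₁ w₂, H.Adj w₁ w₂ → ∃ v₁ ∈ f w₁, ∃ v₂ ∈ f w₂, G.Adj v₁ v₂)

/-- Wagner's characterization of planarity: no `K₅` and no `K₃,₃` minor. -/
def SimpleGraph.IsPlanar {V : Type*} (G : SimpleGraph V) : Prop :=
  ¬ G.HasMinor (completeGraph (Fin 5)) ∧
  ¬ G.HasMinor (completeBipartiteGraph (Fin 3) (Fin 3))

namespace PM
open Relation

variable {V : Type*}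

/-- step relation inside a set -/
def R (L : SimpleGraph V) (s : Set V) (a b : V) : Prop := L.Adj a b ∧ a ∈ s ∧ b ∈ s

/-- connected vertex sets -/
def Conn (L : SimpleGraph V) (s : Set V) : Prop :=
  s.Nonempty ∧ ∀ a ∈ s, ∀ b ∈ s, ReflTransGen (R L s) a b

/-- some edge between the two sets -/
def Tch (L : SimpleGraph V) (s t : Set V) : Prop := ∃ a ∈ s, ∃ b ∈ t, L.Adj a b

lemma Tch.symm {L : SimpleGraph V} {s t : Set V} (h : Tch L s t) : Tch L t s := by
  obtain ⟨a, ha, b, hb, h⟩ := h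
  exact ⟨b, hb, a, ha, h.symm⟩

lemma R.symm {L : SimpleGraph V} {s : Set V} {a b : V} (h : R L s a b) : R L s b a :=
  ⟨h.1.symm, h.2.2, h.2.1⟩

lemma rtg_symm {L : SimpleGraph V} {s : Set V} {a b : V} (h : ReflTransGen (R L s) a b) :
    ReflTransGen (R L s) b a := by
  induction h with
  | refl => exact .refl
  | tail _ h ih => exact .head (R.symm h) ih

lemma rtg_mono {L : SimpleGraph V} {s t : Set V} (hst : s ⊆ t) {a b : V}
    (h : ReflTransGen (R L s) a b) : ReflTransGen (R L t) a b := by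
  induction h with
  | refl => exact .refl
  | tail _ h ih => exact ih.tail ⟨h.1, hst h.2.1, hst h.2.2⟩

lemma conn_of_center {L : SimpleGraph V} {s : Set V} {c : V} (hc : c ∈ s)
    (h : ∀ a ∈ s, ReflTransGen (R L s) c a) : Conn L s :=
  ⟨⟨c, hc⟩, fun a ha b hb => (rtg_symm (h a ha)).trans (h b hb)⟩

lemma conn_singleton (L : SimpleGraph V) (a : V) : Conn L {a} :=
  conn_of_center rfl (by rintro b rfl; exact .refl)

lemma conn_insert {L : SimpleGraph V} {s : Set V} {a b : V} (hs : Conn L s) (hb : b ∈ s)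
    (hab : L.Adj a b) : Conn L (insert a s) := by
  refine conn_of_center (c := b) (by simp [hb]) ?_
  rintro c (rfl | hc)
  · exact .single ⟨hab.symm, by simp [hb], by simp⟩
  · exact rtg_mono (Set.subset_insert _ _) (hs.2 b hb c hc)

/-- component of `a` in `s` -/
def comp (L : SimpleGraph V) (s : Set V) (a : V) : Set V := {z | ReflTransGen (R L s) a z}

lemma comp_sub {L : SimpleGraph V} {s : Set V} {a : V} (ha : a ∈ s) : comp L s a ⊆ s := by
  intro z hz
  induction hz with
  | refl => exact ha
  | tail _ h _ => exact h.2.2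

lemma mem_comp (L : SimpleGraph V) (s : Set V) (a : V) : a ∈ comp L s a := ReflTransGen.refl

lemma comp_closed {L : SimpleGraph V} {s : Set V} {a z w : V} (ha : a ∈ s)
    (hz : z ∈ comp L s a) (hw : w ∈ s) (h : L.Adj z w) : w ∈ comp L s a :=
  ReflTransGen.tail hz ⟨h, comp_sub ha hz, hw⟩

lemma comp_conn {L : SimpleGraph V} {s : Set V} {a : V} (ha : a ∈ s) : Conn L (comp L s a) := by
  refine conn_of_center (mem_comp L s a) ?_
  intro z hz
  induction hz with
  | refl => exact .refl
  | tail h1 h2 ih => exact ih.tail ⟨h2.1, h1, h1.tail h2⟩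

lemma adj_comp {L : SimpleGraph V} {s : Set V} {x y : V} (hy : y ∈ s) (hxy : y ≠ x)
    (h : ReflTransGen (R L s) x y) : ∃ z ∈ comp L (s \ {x}) y, L.Adj x z := by
  have hy' : y ∈ s \ {x} := ⟨hy, hxy⟩
  have key : ∀ u, ReflTransGen (R L s) u y →
      u ∈ comp L (s \ {x}) y ∨ ∃ z ∈ comp L (s \ {x}) y, L.Adj x z := by
    intro u hu
    induction hu using ReflTransGen.head_induction_on with
    | refl => exact .inl (mem_comp _ _ _)
    | head h1 _ ih =>
      rename_i u' w _
      rcases ih with ih | ih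
      · by_cases hux : u' = x
        · subst hux
          exact .inr ⟨w, ih, h1.1⟩
        · exact .inl (comp_closed hy' ih ⟨h1.2.1, hux⟩ h1.1.symm)
      · exact .inr ih
  rcases key x h with h | h
  · exact absurd rfl (comp_sub hy' h).2
  · exact h

lemma exists_nbr {L : SimpleGraph V} {s : Set V} (hs : Conn L s) {a b : V} (ha : a ∈ s)
    (hb : b ∈ s) (hab : a ≠ b) : ∃ c ∈ s, L.Adj a c := by
  rcases (ReflTransGen.cases_head (hs.2 a ha b hb)) with h | ⟨c, h, _⟩
  · exact absurd h hab
  · exact ⟨c, h.2.2, h.1⟩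

def K4 (L : SimpleGraph V) : Prop := ∃ A B C D : Set V,
  (Conn L A ∧ Conn L B ∧ Conn L C ∧ Conn L D) ∧
  (Disjoint A B ∧ Disjoint A C ∧ Disjoint A D ∧ Disjoint B C ∧ Disjoint B D ∧ Disjoint C D) ∧
  (Tch L A B ∧ Tch L A C ∧ Tch L A D ∧ Tch L B C ∧ Tch L B D ∧ Tch L C D)

def K23 (L : SimpleGraph V) : Prop := ∃ A B X Y Z : Set V,
  (Conn L A ∧ Conn L B ∧ Conn L X ∧ Conn L Y ∧ Conn L Z) ∧
  (Disjoint A B ∧ Disjoint A X ∧ Disjoint A Y ∧ Disjoint A Z ∧ Disjoint B X ∧ Disjoint B Y ∧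
    Disjoint B Z ∧ Disjoint X Y ∧ Disjoint X Z ∧ Disjoint Y Z) ∧
  (Tch L A X ∧ Tch L A Y ∧ Tch L A Z ∧ Tch L B X ∧ Tch L B Y ∧ Tch L B Z)

structure Good (L : SimpleGraph V) (P C : Set V) (b₁ b₂ : V) : Prop where
  conn : Conn L C
  ne : ∃ p ∈ C, p ∈ P
  n1 : b₁ ∉ C
  n2 : b₂ ∉ C
  bd : ∀ a ∈ C, ∀ c, c ∉ C → L.Adj a c → c = b₁ ∨ c = b₂
  out : b₁ = b₂ ∨ ∃ B : Set V, Conn L B ∧ b₂ ∈ B ∧ b₁ ∉ B ∧ Disjoint B C ∧ ∃ z ∈ B, L.Adj b₁ z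

/-- base case -/
lemma good_base [Finite V] {L : SimpleGraph V} {P C : Set V} {b₁ b₂ p : V}
    (hQ : ∀ a b, L.Adj a b → a ∈ P ∨ b ∈ P)
    (hQ2 : ∀ q, q ∉ P → ∀ a, L.Adj q a → ∃ b, b ≠ a ∧ L.Adj q b)
    (hP : ∀ p ∈ P, (3 ≤ (L.neighborSet p).ncard ∧ ∀ a, L.Adj p a → a ∈ P) ∨
      5 ≤ (L.neighborSet p).ncard)
    (g : Good L P C b₁ b₂) (hp : p ∈ C) (hpP : p ∈ P) (hu : ∀ a ∈ C, a ∈ P → a = p) :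
    K23 L := by
  have h2 : ({b₁, b₂} : Set V).ncard ≤ 2 := by
    exact (Set.ncard_insert_le _ _).trans (by simp)
  rcases hP p hpP with ⟨h3, hall⟩ | h5
  · have : L.neighborSet p ⊆ {b₁, b₂} := by
      intro a ha
      by_cases haC : a ∈ C
      · have := hu a haC (hall a ha)
        subst this
        exact absurd ha (L.irrefl)
      · exact g.bd p hp a haC ha
    have := Set.ncard_le_ncard this
    omega
  · have h3 : 2 < (L.neighborSet p \ {b₁, b₂}).ncard := by
      have := Set.le_ncard_sdiff ({b₁, b₂} : Set V) (L.neighborSet p)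
      omega
    rw [Set.two_lt_ncard_iff] at h3
    obtain ⟨q₁, q₂, q₃, h1, h2, h3, h12, h13, h23⟩ := h3
    obtain ⟨O, hO, hOC, hb1, hb2⟩ : ∃ O, Conn L O ∧ Disjoint O C ∧ b₁ ∈ O ∧ b₂ ∈ O := by
      rcases g.out with h | ⟨B, hB, hb2, hb1, hd, z, hz, hbz⟩
      · exact ⟨{b₁}, conn_singleton _ _, by simpa using g.n1, rfl, h.symm⟩
      · refine ⟨insert b₁ B, conn_insert hB hz hbz, ?_, by simp, by simp [hb2]⟩
        rw [Set.disjoint_insert_left]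
        exact ⟨g.n1, hd⟩
    have key : ∀ q ∈ L.neighborSet p \ {b₁, b₂}, q ∈ C ∧ Tch L O {q} := by
      rintro q ⟨hq, hqb⟩
      have hq : L.Adj p q := hq
      have hqC : q ∈ C := by
        by_contra hqC
        exact hqb (g.bd p hp q hqC hq)
      refine ⟨hqC, ?_⟩
      have hqP : q ∉ P := fun h => by
        have := hu q hqC h
        subst this
        exact L.irrefl hq
      obtain ⟨b, hbp, hb⟩ := hQ2 q hqP p hq.symm
      have hbP : b ∈ P := (hQ _ _ hb).resolve_left hqP
      have hbC : b ∉ C := fun h => hbp (hu b h hbP)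
      have : b ∈ O := by
        rcases g.bd q hqC b hbC hb with rfl | rfl <;> assumption
      exact ⟨b, this, q, rfl, hb.symm⟩
    have nO : ∀ c ∈ C, c ∉ O := fun c hc h => Set.disjoint_left.1 hOC h hc
    have e : ∀ q ∈ L.neighborSet p \ {b₁, b₂}, p ≠ q := fun q hq => L.ne_of_adj hq.1
    refine ⟨{p}, O, {q₁}, {q₂}, {q₃}, ⟨conn_singleton _ _, hO, conn_singleton _ _,
      conn_singleton _ _, conn_singleton _ _⟩, ?_, ?_⟩
    · simp only [Set.disjoint_singleton_left, Set.disjoint_singleton_right, Set.mem_singleton_iff]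
      exact ⟨nO _ hp, (e _ h1).symm, (e _ h2).symm, (e _ h3).symm, nO _ (key _ h1).1, nO _ (key _ h2).1,
        nO _ (key _ h3).1, by tauto, by tauto, by tauto⟩
    · exact ⟨⟨p, rfl, q₁, rfl, h1.1⟩, ⟨p, rfl, q₂, rfl, h2.1⟩, ⟨p, rfl, q₃, rfl, h3.1⟩,
        (key _ h1).2, (key _ h2).2, (key _ h3).2⟩

lemma good_main [Finite V] {L : SimpleGraph V} {P : Set V}
    (hQ : ∀ a b, L.Adj a b → a ∈ P ∨ b ∈ P)
    (hQ2 : ∀ q, q ∉ P → ∀ a, L.Adj q a → ∃ b, b ≠ a ∧ L.Adj q b)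
    (hP : ∀ p ∈ P, (3 ≤ (L.neighborSet p).ncard ∧ ∀ a, L.Adj p a → a ∈ P) ∨
      5 ≤ (L.neighborSet p).ncard) :
    ∀ n, ∀ C : Set V, C.ncard = n → ∀ b₁ b₂, Good L P C b₁ b₂ → K4 L ∨ K23 L := by
  intro n
  induction n using Nat.strong_induction_on with
  | _ n ih =>
  intro C hn b₁ b₂ g
  obtain ⟨p, hpC, hpP⟩ := g.ne
  by_cases hu : ∀ a ∈ C, a ∈ P → a = p
  · exact .inr (good_base hQ hQ2 hP g hpC hpP hu)
  push Not at hu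
  obtain ⟨p', hp'C, hp'P, hpp'⟩ := hu
  have hex : ∀ x, ∃ a ∈ C \ {x}, a ∈ P := by
    intro x
    by_cases h : p = x
    · exact ⟨p', ⟨hp'C, by rintro rfl; exact hpp' h.symm⟩, hp'P⟩
    · exact ⟨p, ⟨hpC, h⟩, hpP⟩
  by_contra hcon
  have ih' : ∀ D : Set V, ∀ x ∈ C, D ⊆ C \ {x} → ∀ c₁ c₂, ¬ Good L P D c₁ c₂ := by
    intro D x hx hD c₁ c₂ hg
    refine hcon (ih D.ncard ?_ D rfl c₁ c₂ hg)
    rw [← hn]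
    apply Set.ncard_lt_ncard _ (Set.toFinite _)
    refine ⟨fun z hz => (hD hz).1, fun h => (hD (h hx)).2 rfl⟩
  -- boundary of a component
  have hbdD : ∀ x ∈ C, ∀ a ∈ C \ {x}, ∀ d ∈ comp L (C \ {x}) a, ∀ c, c ∉ comp L (C \ {x}) a →
      L.Adj d c → c = x ∨ c = b₁ ∨ c = b₂ := by
    intro x hx a ha d hd c hc hdc
    by_cases hcx : c = x
    · exact .inl hcx
    · right
      by_cases hcC : c ∈ C
      · exact absurd (comp_closed ha hd ⟨hcC, hcx⟩ hdc) hc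
      · exact g.bd d (comp_sub ha hd).1 c hcC hdc
  -- single boundary
  have single : ∀ b, b ∉ C → (∀ a ∈ C, ∀ c, c ∉ C → L.Adj a c → c = b) → False := by
    intro b hb hbd
    by_cases hx : ∃ x ∈ C, L.Adj b x
    · obtain ⟨x, hx, hbx⟩ := hx
      obtain ⟨a, ha, haP⟩ := hex x
      refine ih' _ x hx (comp_sub ha) b x ⟨comp_conn ha, ⟨a, mem_comp _ _ _, haP⟩,
        fun h => hb (comp_sub ha h).1, fun h => (comp_sub ha h).2 rfl, ?_, ?_⟩
      · intro d hd c hc hdc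
        by_cases hcx : c = x
        · exact .inr hcx
        · left
          by_cases hcC : c ∈ C
          · exact absurd (comp_closed ha hd ⟨hcC, hcx⟩ hdc) hc
          · exact hbd d (comp_sub ha hd).1 c hcC hdc
      · right
        refine ⟨{x}, conn_singleton _ _, rfl, L.ne_of_adj hbx, ?_, x, rfl, hbx⟩
        rw [Set.disjoint_singleton_left]
        exact fun h => (comp_sub ha h).2 rfl
    · push Not at hx
      obtain ⟨a, ha, haP⟩ := hex p
      refine ih' _ p hpC (comp_sub ha) p p ⟨comp_conn ha, ⟨a, mem_comp _ _ _, haP⟩,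
        fun h => (comp_sub ha h).2 rfl, fun h => (comp_sub ha h).2 rfl, ?_, .inl rfl⟩
      intro d hd c hc hdc
      left
      by_contra hcx
      by_cases hcC : c ∈ C
      · exact absurd (comp_closed ha hd ⟨hcC, hcx⟩ hdc) hc
      · have := hbd d (comp_sub ha hd).1 c hcC hdc
        subst this
        exact hx d (comp_sub ha hd).1 hdc.symm
  rcases g.out with rfl | ⟨B, hB, hb2, hb1, hBC, z, hz, hb1z⟩
  · exact single b₁ g.n1 (fun a ha c hc h => (g.bd a ha c hc h).elim id id)
  have hne : b₁ ≠ b₂ := by rintro rfl; exact hb1 hb2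
  have hT : Tch L {b₁} B := ⟨b₁, rfl, z, hz, hb1z⟩
  have nB : ∀ c ∈ C, c ∉ B := fun c hc h => Set.disjoint_left.1 hBC h hc
  obtain ⟨x₀, hx₀, hbx₀⟩ : ∃ x ∈ C, L.Adj b₁ x := by
    by_contra h
    push Not at h
    refine single b₂ g.n2 (fun a ha c hc hac => (g.bd a ha c hc hac).resolve_left ?_)
    rintro rfl
    exact h a ha hac.symm
  obtain ⟨y, hy, hby⟩ : ∃ y ∈ C, L.Adj b₂ y := by
    by_contra h
    push Not at h
    refine single b₁ g.n1 (fun a ha c hc hac => (g.bd a ha c hc hac).resolve_right ?_)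
    rintro rfl
    exact h a ha hac.symm
  -- touching for all P-components
  have touch : ∀ x ∈ C, L.Adj b₁ x → ∀ a ∈ C \ {x}, a ∈ P →
      Tch L {b₁} (comp L (C \ {x}) a) ∧ Tch L B (comp L (C \ {x}) a) ∧
      Tch L {x} (comp L (C \ {x}) a) := by
    intro x hx hbx a ha haP
    have hDC : ∀ d ∈ comp L (C \ {x}) a, d ∈ C := fun d hd => (comp_sub ha hd).1
    have hxD : x ∉ comp L (C \ {x}) a := fun h => (comp_sub ha h).2 rfl
    have hbd := hbdD x hx a ha
    refine ⟨?_, ?_, ?_⟩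
    · by_contra h
      refine ih' _ x hx (comp_sub ha) x b₂ ⟨comp_conn ha, ⟨a, mem_comp _ _ _, haP⟩,
        hxD, fun h => g.n2 (hDC _ h), ?_, .inr ⟨insert b₁ B, conn_insert hB hz hb1z, by simp [hb2],
          ?_, ?_, b₁, by simp, hbx.symm⟩⟩
      · intro d hd c hc hdc
        rcases hbd d hd c hc hdc with h' | h' | h'
        · exact .inl h'
        · subst h'
          exact absurd ⟨_, rfl, d, hd, hdc.symm⟩ h
        · exact .inr h'
      · rintro (h | h)
        · exact L.ne_of_adj hbx h.symm
        · exact nB x hx h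
      · rw [Set.disjoint_insert_left]
        exact ⟨fun h => g.n1 (hDC _ h), hBC.mono_right hDC⟩
    · by_contra h
      refine ih' _ x hx (comp_sub ha) b₁ x ⟨comp_conn ha, ⟨a, mem_comp _ _ _, haP⟩,
        fun h => g.n1 (hDC _ h), hxD, ?_, .inr ⟨{x}, conn_singleton _ _, rfl,
          L.ne_of_adj hbx, by simpa using hxD, x, rfl, hbx⟩⟩
      intro d hd c hc hdc
      rcases hbd d hd c hc hdc with h' | h' | h'
      · exact .inr h'
      · exact .inl h'
      · subst h'
        exact absurd ⟨_, hb2, d, hd, hdc.symm⟩ h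
    · by_contra h
      refine ih' _ x hx (comp_sub ha) b₁ b₂ ⟨comp_conn ha, ⟨a, mem_comp _ _ _, haP⟩,
        fun h => g.n1 (hDC _ h), fun h => g.n2 (hDC _ h), ?_, .inr ⟨B, hB, hb2, hb1,
          hBC.mono_right hDC, z, hz, hb1z⟩⟩
      intro d hd c hc hdc
      rcases hbd d hd c hc hdc with h' | h' | h'
      · subst h'
        exact absurd ⟨_, rfl, d, hd, hdc.symm⟩ h
      · exact .inl h'
      · exact .inr h'
  -- the P-component
  have main : ∀ x ∈ C, L.Adj b₁ x → ∃ D : Set V, D ⊆ C \ {x} ∧ 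
      (∀ d ∈ D, ∀ d' ∈ D, ReflTransGen (R L (C \ {x})) d d') ∧
      (∃ x' ∈ D, L.Adj b₁ x') ∧ (∀ y ∈ C, L.Adj b₂ y → y ∈ D) ∧
      (∀ e ∈ C, e ∉ D → e ≠ x → L.Adj e x ∧ e ∉ P) := by
    intro x hx hbx
    obtain ⟨a, ha, haP⟩ := hex x
    obtain ⟨t1, t2, t3⟩ := touch x hx hbx a ha haP
    have hDC : ∀ d ∈ comp L (C \ {x}) a, d ∈ C := fun d hd => (comp_sub ha hd).1
    have hxD : x ∉ comp L (C \ {x}) a := fun h => (comp_sub ha h).2 rfl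
    have huniq : ∀ a' ∈ C \ {x}, a' ∈ P → a' ∈ comp L (C \ {x}) a := by
      intro a' ha' ha'P
      by_contra hn'
      obtain ⟨s1, s2, s3⟩ := touch x hx hbx a' ha' ha'P
      have hDC' : ∀ d ∈ comp L (C \ {x}) a', d ∈ C := fun d hd => (comp_sub ha' hd).1
      have hxD' : x ∉ comp L (C \ {x}) a' := fun h => (comp_sub ha' h).2 rfl
      have hdis : Disjoint (comp L (C \ {x}) a) (comp L (C \ {x}) a') := by
        rw [Set.disjoint_left]
        intro w hw hw'
        exact hn' (ReflTransGen.trans hw (rtg_symm hw'))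
      refine hcon (.inr ⟨comp L (C \ {x}) a, comp L (C \ {x}) a', {b₁}, {x}, B,
        ⟨comp_conn ha, comp_conn ha', conn_singleton _ _, conn_singleton _ _, hB⟩,
        ⟨hdis, ?_, ?_, (hBC.mono_right hDC).symm, ?_, ?_, (hBC.mono_right hDC').symm, ?_, ?_, ?_⟩,
        ⟨t1.symm, t3.symm, t2.symm, s1.symm, s3.symm, s2.symm⟩⟩)
      · simpa using fun h => g.n1 (hDC _ h)
      · simpa using hxD
      · simpa using fun h => g.n1 (hDC' _ h)
      · simpa using hxD'
      · simpa using (L.ne_of_adj hbx)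
      · simpa using hb1
      · simpa using nB x hx
    have hE : ∀ e ∈ C, e ∉ comp L (C \ {x}) a → e ≠ x → L.Adj e x ∧ e ∉ P := by
      intro e he heD hex'
      have heP : e ∉ P := fun h => heD (huniq e ⟨he, hex'⟩ h)
      refine ⟨?_, heP⟩
      obtain ⟨f, hf, hef⟩ := exists_nbr g.conn he hx hex'
      have hfP := (hQ _ _ hef).resolve_left heP
      by_cases hfx : f = x
      · exact hfx ▸ hef
      · exact absurd (comp_closed ha (huniq f ⟨hf, hfx⟩ hfP) ⟨he, hex'⟩ hef.symm) heD
    refine ⟨comp L (C \ {x}) a, comp_sub ha, fun d hd d' hd' => (rtg_symm hd).trans hd', ?_, ?_, hE⟩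
    · obtain ⟨_, rfl, x', hx', h⟩ := t1
      exact ⟨x', hx', h⟩
    · intro y hy hby
      by_contra hyD
      have hEc : Conn L (C \ comp L (C \ {x}) a) := by
        refine conn_of_center (c := x) ⟨hx, hxD⟩ ?_
        intro e he
        by_cases hex' : e = x
        · subst hex'; exact .refl
        · exact .single ⟨(hE e he.1 he.2 hex').1.symm, ⟨hx, hxD⟩, he⟩
      have hEC : C \ comp L (C \ {x}) a ⊆ C := Set.sdiff_subset
      refine hcon (.inl ⟨{b₁}, B, C \ comp L (C \ {x}) a, comp L (C \ {x}) a,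
        ⟨conn_singleton _ _, hB, hEc, comp_conn ha⟩,
        ⟨by simpa using hb1, ?_, ?_, hBC.mono_right hEC, hBC.mono_right hDC, Set.disjoint_sdiff_left⟩,
        ⟨hT, ⟨b₁, rfl, x, ⟨hx, hxD⟩, hbx⟩, t1, ⟨b₂, hb2, y, ⟨hy, hyD⟩, hby⟩, t2, ?_⟩⟩)
      · simpa using fun h => absurd h g.n1
      · simpa using fun h => g.n1 (hDC _ h)
      · obtain ⟨_, rfl, w, hw, h⟩ := t3
        exact ⟨_, ⟨hx, hxD⟩, w, hw, h⟩
  -- choose x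
  obtain ⟨x, hx, hbx, hxP⟩ : ∃ x ∈ C, L.Adj b₁ x ∧ (x ∈ P ∨ ∀ x' ∈ C, L.Adj b₁ x' → x' ∉ P) := by
    by_cases h : ∃ x ∈ C, L.Adj b₁ x ∧ x ∈ P
    · obtain ⟨x, h1, h2, h3⟩ := h
      exact ⟨x, h1, h2, .inl h3⟩
    · push Not at h
      exact ⟨x₀, hx₀, hbx₀, .inr h⟩
  obtain ⟨D, hD1, hD2, ⟨x', hx'D, hbx'⟩, hD4, hD5⟩ := main x hx hbx
  have hx'C := (hD1 hx'D).1
  have hxx' : x' ≠ x := (hD1 hx'D).2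
  obtain ⟨D', hD1', hD2', -, hD4', hD5'⟩ := main x' hx'C hbx'
  have hxD' : x ∈ D' := by
    by_contra h
    obtain ⟨h1, h2⟩ := hD5' x hx h hxx'.symm
    rcases hxP with h3 | h3
    · exact h2 h3
    · exact ((hQ _ _ h1).resolve_left h2 |> h3 x' hx'C hbx')
  have hyD := hD4 y hy hby
  have hyD' := hD4' y hy hby
  have hyx : y ≠ x := (hD1 hyD).2
  have hyx' : y ≠ x' := (hD1' hyD').2
  have e1 := adj_comp (hD1 hyD) hyx' (hD2 x' hx'D y hyD)
  have e2 := adj_comp (hD1' hyD') hyx (hD2' x hxD' y hyD')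
  have hs : (C \ {x'}) \ {x} = (C \ {x}) \ {x'} := by
    ext; simp; tauto
  rw [hs] at e2
  have hyF : y ∈ (C \ {x}) \ {x'} := ⟨hD1 hyD, hyx'⟩
  have hF := comp_sub (L := L) hyF
  have hFC : comp L ((C \ {x}) \ {x'}) y ⊆ C := fun w hw => (hF hw).1.1
  obtain ⟨z1, hz1, e1⟩ := e1
  obtain ⟨z2, hz2, e2⟩ := e2
  refine hcon (.inr ⟨{b₁}, comp L ((C \ {x}) \ {x'}) y, {x}, {x'}, B,
    ⟨conn_singleton _ _, comp_conn hyF, conn_singleton _ _, conn_singleton _ _, hB⟩,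
    ⟨?_, ?_, ?_, ?_, ?_, ?_, (hBC.mono_right hFC).symm, ?_, ?_, ?_⟩,
    ⟨⟨_, rfl, _, rfl, hbx⟩, ⟨_, rfl, _, rfl, hbx'⟩, hT, ⟨z2, hz2, _, rfl, e2.symm⟩,
     ⟨z1, hz1, _, rfl, e1.symm⟩, ⟨y, mem_comp _ _ _, b₂, hb2, hby.symm⟩⟩⟩)
  · simpa using fun h => g.n1 (hFC h)
  · simpa using (L.ne_of_adj hbx)
  · simpa using (L.ne_of_adj hbx')
  · simpa using hb1
  · simpa using fun h => (hF h).1.2 rfl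
  · simpa using fun h => (hF h).2 rfl
  · simpa using hxx'.symm
  · simpa using nB x hx
  · simpa using nB x' hx'C

lemma link_lemma [Finite V] {L : SimpleGraph V} {P : Set V}
    (hQ : ∀ a b, L.Adj a b → a ∈ P ∨ b ∈ P)
    (hQ2 : ∀ q, q ∉ P → ∀ a, L.Adj q a → ∃ b, b ≠ a ∧ L.Adj q b)
    (hP : ∀ p ∈ P, (3 ≤ (L.neighborSet p).ncard ∧ ∀ a, L.Adj p a → a ∈ P) ∨
      5 ≤ (L.neighborSet p).ncard) (hne : P.Nonempty) : K4 L ∨ K23 L := by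
  obtain ⟨p, hp⟩ := hne
  obtain ⟨a, hap, haP⟩ : ∃ a, a ≠ p ∧ a ∈ P := by
    have hpos : 0 < (L.neighborSet p).ncard := by
      rcases hP p hp with h | h <;> omega
    obtain ⟨q, hq⟩ := (Set.ncard_pos (Set.toFinite _)).1 hpos
    have hq : L.Adj p q := hq
    by_cases hqP : q ∈ P
    · exact ⟨q, (L.ne_of_adj hq).symm, hqP⟩
    · obtain ⟨b, hb, hqb⟩ := hQ2 q hqP p hq.symm
      exact ⟨b, hb, (hQ _ _ hqb).resolve_left hqP⟩
  have ha : a ∈ ({p} : Set V)ᶜ := hap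
  have hpc : p ∉ comp L {p}ᶜ a := fun h => comp_sub ha h rfl
  refine good_main hQ hQ2 hP _ (comp L {p}ᶜ a) rfl p p
    ⟨comp_conn ha, ⟨a, mem_comp _ _ _, haP⟩, hpc, hpc, ?_, .inl rfl⟩
  intro d hd c hc hdc
  left
  by_contra hcp
  exact hc (comp_closed ha hd hcp hdc)

lemma conn_iff {G : SimpleGraph V} {s : Set V} : (G.induce s).Connected ↔ Conn G s := by
  constructor
  · intro h
    obtain ⟨⟨c, hc⟩⟩ := h.nonempty
    refine conn_of_center hc ?_
    intro a ha
    have := (SimpleGraph.reachable_iff_reflTransGen _ _).1 (h.preconnected ⟨c, hc⟩ ⟨a, ha⟩)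
    have key : ∀ z : s, ReflTransGen (G.induce s).Adj ⟨c, hc⟩ z → ReflTransGen (R G s) c z := by
      intro z hz
      induction hz with
      | refl => exact .refl
      | tail _ h2 ih => exact ih.tail ⟨h2, Subtype.coe_prop _, Subtype.coe_prop _⟩
    exact key _ this
  · intro h
    obtain ⟨c, hc⟩ := h.1
    have key : ∀ a (ha : a ∈ s), (G.induce s).Reachable ⟨c, hc⟩ ⟨a, ha⟩ := by
      intro a ha
      have h1 := h.2 c hc a ha
      clear h
      induction h1 with
      | refl => exact SimpleGraph.Reachable.refl _
      | tail _ h2 ih => 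
        refine (ih h2.2.1).trans (SimpleGraph.Adj.reachable ?_)
        exact h2.1
    have : Nonempty s := ⟨⟨c, hc⟩⟩
    exact ⟨fun a b => (key a a.2).symm.trans (key b b.2)⟩

/-- contract `y` into `v` (the vertex `y` becomes isolated) -/
def ctr (G : SimpleGraph V) (v y : V) : SimpleGraph V where
  Adj a b := a ≠ b ∧ a ≠ y ∧ b ≠ y ∧ (G.Adj a b ∨ (a = v ∧ G.Adj y b) ∨ (b = v ∧ G.Adj y a))
  symm := ⟨fun a b h => ⟨h.1.symm, h.2.2.1, h.2.1, by
    rcases h.2.2.2 with h | h | h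
    · exact .inl h.symm
    · exact .inr (.inr h)
    · exact .inr (.inl h)⟩⟩
  loopless := ⟨fun a h => h.1 rfl⟩

lemma ctr_minor {W : Type*} {G : SimpleGraph V} {H : SimpleGraph W} {v y : V} (hvy : G.Adj v y)
    (hH : ∀ w, ∃ w', H.Adj w w') (h : (ctr G v y).HasMinor H) : G.HasMinor H := by
  obtain ⟨f, hne, hconn, hdis, hadj⟩ := h
  have hconn' : ∀ w, Conn (ctr G v y) (f w) := fun w => conn_iff.1 (hconn w)
  have hy : ∀ w, y ∉ f w := by
    intro w hyw
    obtain ⟨w', hw⟩ := hH w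
    obtain ⟨v1, hv1, v2, hv2, h12⟩ := hadj w w' hw
    obtain ⟨c, hc, h⟩ := exists_nbr (hconn' w) hyw hv1 h12.2.1.symm
    exact h.2.1 rfl
  have hsub : ∀ w, f w ⊆ f w ∪ {z | z = y ∧ v ∈ f w} := fun w => Set.subset_union_left
  have hvu : ∀ w w', v ∈ f w → v ∈ f w' → w = w' := by
    intro w w' h h'
    by_contra hn
    exact Set.disjoint_left.1 (hdis hn) h h'
  refine ⟨fun w => f w ∪ {z | z = y ∧ v ∈ f w}, fun w => (hne w).mono (hsub w), ?_, ?_, ?_⟩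
  · intro w
    rw [conn_iff]
    change Conn G (f w ∪ {z | z = y ∧ v ∈ f w})
    by_cases hv : v ∈ f w
    · have e : f w ∪ {z | z = y ∧ v ∈ f w} = insert y (f w) := by
        ext z; simp [hv]
      rw [e]
      refine conn_of_center (c := v) (by simp [hv]) ?_
      have step : ∀ a b, R (ctr G v y) (f w) a b → ReflTransGen (R G (insert y (f w))) a b := by
        rintro a b ⟨hab, ha, hb⟩
        have ha' : a ∈ insert y (f w) := by simp [ha]
        have hb' : b ∈ insert y (f w) := by simp [hb]
        rcases hab.2.2.2 with h | ⟨rfl, h⟩ | ⟨rfl, h⟩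
        · exact .single ⟨h, ha', hb'⟩
        · exact .head ⟨hvy, ha', by simp⟩ (.single ⟨h, by simp, hb'⟩)
        · exact .head ⟨h.symm, ha', by simp⟩ (.single ⟨hvy.symm, by simp, hb'⟩)
      rintro a (rfl | ha)
      · exact .single ⟨hvy, by simp [hv], by simp⟩
      · have := (hconn' w).2 v hv a ha
        induction this with
        | refl => exact .refl
        | tail _ h ih => exact (ih h.2.1).trans (step _ _ h)
    · have e : f w ∪ {z | z = y ∧ v ∈ f w} = f w := by
        ext z; simp [hv]
      rw [e]
      refine ⟨hne w, fun a ha b hb => ?_⟩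
      have := (hconn' w).2 a ha b hb
      clear hb
      induction this with
      | refl => exact .refl
      | tail _ h ih =>
        refine ih.tail ⟨?_, h.2⟩
        rcases h.1.2.2.2 with h' | ⟨rfl, _⟩ | ⟨rfl, _⟩
        · exact h'
        · exact absurd h.2.1 hv
        · exact absurd h.2.2 hv
  · intro w1 w2 hw
    have : Disjoint (f w1) (f w2) := hdis hw
    rw [Set.disjoint_left] at this ⊢
    rintro z (hz | ⟨rfl, hz⟩) (hz' | ⟨hz1, hz'⟩)
    · exact this hz hz'
    · subst hz1; exact hy _ hz
    · exact hy _ hz'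
    · exact hw (hvu _ _ hz hz')
  · intro w1 w2 hw
    obtain ⟨a, ha, b, hb, hab⟩ := hadj w1 w2 hw
    rcases hab.2.2.2 with h | ⟨rfl, h⟩ | ⟨rfl, h⟩
    · exact ⟨a, .inl ha, b, .inl hb, h⟩
    · exact ⟨y, .inr ⟨rfl, ha⟩, b, .inl hb, h⟩
    · exact ⟨a, .inl ha, y, .inr ⟨rfl, hb⟩, h.symm⟩

lemma ctr_count [Finite V] {G : SimpleGraph V} {v y : V} (hvy : G.Adj v y) :
    G.edgeSet.ncard ≤ (ctr G v y).edgeSet.ncard + 1 + {z | G.Adj v z ∧ G.Adj y z}.ncard := by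
  set A : Set (Sym2 V) := {e | e ∈ G.edgeSet ∧ y ∉ e}
  set Z : Set V := {z | G.Adj y z ∧ z ≠ v ∧ ¬ G.Adj v z}
  have h1 : G.edgeSet ⊆ A ∪ (fun z => s(y, z)) '' {z | G.Adj y z} := by
    intro e he
    by_cases hye : y ∈ e
    · obtain ⟨z, rfl⟩ := hye
      exact .inr ⟨z, he, rfl⟩
    · exact .inl ⟨he, hye⟩
  have h2 : A ∪ (fun z => s(v, z)) '' Z ⊆ (ctr G v y).edgeSet := by
    rintro e (⟨he, hy⟩ | ⟨z, ⟨h1, h2, h3⟩, rfl⟩)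
    · induction e with
      | _ a b =>
      simp only [Sym2.mem_iff, not_or] at hy
      exact ⟨G.ne_of_adj he, Ne.symm hy.1, Ne.symm hy.2, .inl he⟩
    · exact ⟨h2.symm, G.ne_of_adj hvy, (G.ne_of_adj h1).symm, .inr (.inl ⟨rfl, h1⟩)⟩
  have h3 : Disjoint A ((fun z => s(v, z)) '' Z) := by
    rw [Set.disjoint_left]
    rintro _ ⟨h, _⟩ ⟨z, hz, rfl⟩
    exact hz.2.2 h
  have h4 : {z | G.Adj y z} ⊆ insert v ({z | G.Adj v z ∧ G.Adj y z} ∪ Z) := by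
    intro z hz
    have hz : G.Adj y z := hz
    by_cases h : z = v
    · exact .inl h
    · right
      by_cases h' : G.Adj v z
      · exact .inl ⟨h', hz⟩
      · exact .inr ⟨hz, h, h'⟩
  have inj : Function.Injective (fun z => s(v, z)) := fun a b h => Sym2.congr_right.1 h
  have e1 := (Set.ncard_le_ncard h1).trans (Set.ncard_union_le _ _)
  have e2 := Set.ncard_le_ncard h2
  rw [Set.ncard_union_eq h3, Set.ncard_image_of_injective _ inj] at e2
  have e3 := (Set.ncard_le_ncard h4).trans (Set.ncard_insert_le _ _)
  have e4 := Set.ncard_union_le {z | G.Adj v z ∧ G.Adj y z} Z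
  have e5 := Set.ncard_image_le (f := fun z => s(y, z)) (Set.toFinite {z | G.Adj y z})
  omega

lemma all_nbr {L : SimpleGraph V} {s t : Set V} (hs : Conn L s) (h : Tch L s t) :
    ∀ a ∈ s, ∃ b, L.Adj a b := by
  intro a ha
  obtain ⟨c, hc, d, _, hcd⟩ := h
  by_cases hac : a = c
  · exact ⟨d, hac ▸ hcd⟩
  · obtain ⟨e, _, he⟩ := exists_nbr hs ha hc hac
    exact ⟨e, he⟩

/-- link of a vertex -/
def link (G : SimpleGraph V) (v : V) : SimpleGraph V where
  Adj a b := G.Adj a b ∧ G.Adj v a ∧ G.Adj v b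
  symm := ⟨fun _ _ h => ⟨h.1.symm, h.2.2, h.2.1⟩⟩
  loopless := ⟨fun _ h => G.irrefl h.1⟩

lemma conn_link {G : SimpleGraph V} {v : V} {s : Set V} (h : Conn (link G v) s) : Conn G s :=
  ⟨h.1, fun a ha b hb => by
    have := h.2 a ha b hb
    clear hb
    induction this with
    | refl => exact .refl
    | tail _ h ih => exact ih.tail ⟨h.1.1, h.2⟩⟩

lemma tch_link {G : SimpleGraph V} {v : V} {s t : Set V} (h : Tch (link G v) s t) : Tch G s t := by
  obtain ⟨a, ha, b, hb, h⟩ := h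
  exact ⟨a, ha, b, hb, h.1⟩

lemma apex_link {G : SimpleGraph V} {v : V} {s t : Set V} (hs : Conn (link G v) s)
    (h : Tch (link G v) s t) : Disjoint {v} s ∧ Tch G {v} s := by
  have := all_nbr hs h
  constructor
  · rw [Set.disjoint_singleton_left]
    intro hv
    obtain ⟨b, hb⟩ := this v hv
    exact G.irrefl hb.2.1
  · obtain ⟨a, ha⟩ := hs.1
    obtain ⟨b, hb⟩ := this a ha
    exact ⟨v, rfl, a, ha, hb.2.1⟩

lemma k4_link {G : SimpleGraph V} {v : V} (h : K4 (link G v)) :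
    G.HasMinor (completeGraph (Fin 5)) := by
  obtain ⟨A, B, C, D, ⟨cA, cB, cC, cD⟩, ⟨d1, d2, d3, d4, d5, d6⟩, ⟨t1, t2, t3, t4, t5, t6⟩⟩ := h
  obtain ⟨vA, wA⟩ := apex_link cA t1
  obtain ⟨vB, wB⟩ := apex_link cB t1.symm
  obtain ⟨vC, wC⟩ := apex_link cC t2.symm
  obtain ⟨vD, wD⟩ := apex_link cD t3.symm
  replace t1 := tch_link t1
  replace t2 := tch_link t2
  replace t3 := tch_link t3
  replace t4 := tch_link t4
  replace t5 := tch_link t5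
  replace t6 := tch_link t6
  have hc : ∀ i, Conn G ((![{v}, A, B, C, D] : Fin 5 → Set V) i) := by
    intro i
    fin_cases i
    exacts [conn_singleton _ _, conn_link cA, conn_link cB, conn_link cC, conn_link cD]
  refine ⟨![{v}, A, B, C, D], fun i => (hc i).1, fun i => conn_iff.2 (hc i), ?_, ?_⟩
  · intro i j hij
    fin_cases i <;> fin_cases j <;> first | exact absurd rfl hij | assumption | (apply Disjoint.symm; assumption)
  · intro i j hij
    have hij : i ≠ j := hij
    change Tch G _ _
    fin_cases i <;> fin_cases j <;> first | exact absurd rfl hij | assumption | (apply Tch.symm; assumption)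

lemma k23_link {G : SimpleGraph V} {v : V} (h : K23 (link G v)) :
    G.HasMinor (completeBipartiteGraph (Fin 3) (Fin 3)) := by
  obtain ⟨A, B, X, Y, Z, ⟨cA, cB, cX, cY, cZ⟩, ⟨d1, d2, d3, d4, d5, d6, d7, d8, d9, d10⟩,
    ⟨t1, t2, t3, t4, t5, t6⟩⟩ := h
  obtain ⟨vA, -⟩ := apex_link cA t1
  obtain ⟨vB, -⟩ := apex_link cB t4
  obtain ⟨vX, wX⟩ := apex_link cX t1.symm
  obtain ⟨vY, wY⟩ := apex_link cY t2.symm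
  obtain ⟨vZ, wZ⟩ := apex_link cZ t3.symm
  replace t1 := tch_link t1
  replace t2 := tch_link t2
  replace t3 := tch_link t3
  replace t4 := tch_link t4
  replace t5 := tch_link t5
  replace t6 := tch_link t6
  have hc : ∀ i, Conn G ((Sum.elim ![{v}, A, B] ![X, Y, Z] : Fin 3 ⊕ Fin 3 → Set V) i) := by
    rintro (i | i) <;> fin_cases i
    exacts [conn_singleton _ _, conn_link cA, conn_link cB, conn_link cX, conn_link cY, conn_link cZ]
  refine ⟨Sum.elim ![{v}, A, B] ![X, Y, Z], fun i => (hc i).1, fun i => conn_iff.2 (hc i), ?_, ?_⟩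
  · rintro (i | i) (j | j) hij <;>
    fin_cases i <;> fin_cases j <;> first | exact absurd rfl hij | assumption | (apply Disjoint.symm; assumption)
  · rintro (i | i) (j | j) hij
    · simp at hij
    · change Tch G _ _
      fin_cases i <;> fin_cases j <;> assumption
    · change Tch G _ _
      fin_cases i <;> fin_cases j <;> (apply Tch.symm; assumption)
    · simp at hij

theorem weight_bound [Fintype V] (w : V → ℕ) (hw : ∀ a, w a = 2 ∨ w a = 3 ∨ w a = 5) :
    ∀ n, ∀ A : Finset V, A.card = n → ∀ G : SimpleGraph V, G.IsPlanar →
      (∀ a b, G.Adj a b → a ∈ A) → (∀ a b, G.Adj a b → w a = 2 → w b = 5) →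
      G.edgeSet.ncard ≤ ∑ a ∈ A, w a := by
  classical
  intro n
  induction n with
  | zero =>
    intro A hA G _ hGA _
    have : G.edgeSet = ∅ := by
      rw [Set.eq_empty_iff_forall_notMem]
      intro e he
      induction e with
      | _ a b =>
      have := hGA a b he
      simp_all
    simp [this]
  | succ n ih =>
    intro A hA G hG hGA hS
    by_cases hv : ∃ v ∈ A, w v ≠ 2
    swap
    · push Not at hv
      have : G.edgeSet = ∅ := by
        rw [Set.eq_empty_iff_forall_notMem]
        intro e he
        induction e with
        | _ a b =>
        have h1 := hv a (hGA a b he)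
        have h2 := hv b (hGA b a (G.adj_symm he))
        have h3 := hS a b he h1
        omega
      simp [this]
    obtain ⟨v, hvA, hv2⟩ := hv
    by_cases hiso : ∀ a, ¬ G.Adj v a
    · have := ih (A.erase v) (by rw [Finset.card_erase_of_mem hvA]; omega) G hG ?_ hS
      · exact this.trans (Finset.sum_le_sum_of_subset (Finset.erase_subset _ _))
      · intro a b hab
        refine Finset.mem_erase.2 ⟨?_, hGA a b hab⟩
        rintro rfl
        exact hiso b hab
    push Not at hiso
    -- contraction step
    have step : ∀ c y, G.Adj c y → (w c = 5 ∨ (w c = 3 ∧ w y = 3)) →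
        {z | G.Adj c z ∧ G.Adj y z}.ncard + 1 ≤ w y → G.edgeSet.ncard ≤ ∑ a ∈ A, w a := by
      intro c y hcy hcw ht
      have hyA := hGA y c hcy.symm
      have hcA := hGA c y hcy
      have hc := ctr_count hcy
      have := ih (A.erase y) (by rw [Finset.card_erase_of_mem hyA]; omega) (ctr G c y) ?_ ?_ ?_
      · have e := Finset.add_sum_erase A w hyA
        omega
      · refine ⟨fun h => hG.1 (ctr_minor hcy ?_ h), fun h => hG.2 (ctr_minor hcy ?_ h)⟩
        · intro i
          exact ⟨i + 1, by revert i; decide⟩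
        · rintro (i | i)
          · exact ⟨.inr 0, by simp⟩
          · exact ⟨.inl 0, by simp⟩
      · rintro a b ⟨h1, h2, h3, h4⟩
        refine Finset.mem_erase.2 ⟨h2, ?_⟩
        rcases h4 with h | ⟨rfl, h⟩ | ⟨rfl, h⟩
        · exact hGA a b h
        · exact hcA
        · exact hGA a y h.symm
      · rintro a b ⟨h1, h2, h3, h4⟩ ha
        rcases h4 with h | ⟨rfl, h⟩ | ⟨rfl, h⟩
        · exact hS a b h ha
        · omega
        · have := hS a y h.symm ha
          omega
    by_contra hcon
    -- common neighbours
    have hLn : ∀ p, G.Adj v p → (link G v).neighborSet p = {z | G.Adj v z ∧ G.Adj p z} := by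
      intro p hp
      ext z
      exact ⟨fun h => ⟨h.2.2, h.1⟩, fun h => ⟨h.2, hp, h.1⟩⟩
    have hcomm : ∀ a b, {z | G.Adj a z ∧ G.Adj b z} = {z | G.Adj b z ∧ G.Adj a z} := by
      intro a b; ext z; exact and_comm
    have hge : ∀ y, G.Adj v y → (w v = 5 → w y ≤ ((link G v).neighborSet y).ncard) ∧
        3 ≤ w y + 1 ∧ (w y ≠ 2 → 3 ≤ ((link G v).neighborSet y).ncard) := by
      intro y hy
      rw [hLn y hy]
      have a1 : w v = 5 → w y ≤ {z | G.Adj v z ∧ G.Adj y z}.ncard := by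
        intro h
        by_contra hlt
        exact hcon (step v y hy (.inl h) (by omega))
      refine ⟨a1, ?_, ?_⟩
      · rcases hw y with h | h | h <;> omega
      · intro hy2
        rcases hw v with h | h | h
        · exact absurd h hv2
        · rcases hw y with h' | h' | h'
          · exact absurd h' hy2
          · by_contra hlt
            exact hcon (step v y hy (.inr ⟨h, h'⟩) (by omega))
          · by_contra hlt
            refine hcon (step y v hy.symm (.inl h') ?_)
            rw [hcomm]
            omega
        · have := a1 h
          rcases hw y with h' | h' | h' <;> omega
    have h25 : ∀ q, G.Adj v q → w q = 2 → 2 ≤ ((link G v).neighborSet q).ncard := by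
      intro q hq h
      have := (hge q hq).1 (hS q v hq.symm h)
      omega
    have hres := link_lemma (L := link G v) (P := {a | w a ≠ 2 ∧ G.Adj v a}) ?_ ?_ ?_ ?_
    · rcases hres with h | h
      · exact hG.1 (k4_link h)
      · exact hG.2 (k23_link h)
    · rintro a b ⟨h1, h2, h3⟩
      by_cases ha : w a = 2
      · have := hS a b h1 ha
        exact .inr ⟨by omega, h3⟩
      · exact .inl ⟨ha, h2⟩
    · intro q hq a hqa
      have hvq := hqa.2.1
      have hq2 : w q = 2 := by
        by_contra h
        exact hq ⟨h, hvq⟩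
      have := h25 q hvq hq2
      obtain ⟨b, hb, hba⟩ := Set.exists_ne_of_one_lt_ncard (s := (link G v).neighborSet q) (by omega) a
      exact ⟨b, hba, hb⟩
    · rintro p ⟨hp2, hvp⟩
      have h3 := hge p hvp
      by_cases h5 : w v = 5 ∧ w p = 5
      · right
        have := h3.1 h5.1
        omega
      · left
        refine ⟨h3.2.2 hp2, ?_⟩
        rintro a ⟨hpa, -, hva⟩
        refine ⟨fun ha => h5 ⟨hS a v hva.symm ha, hS a p hpa.symm ha⟩, hva⟩
    · obtain ⟨a, ha⟩ := hiso
      by_cases h2 : w a = 2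
      · have := h25 a ha h2
        obtain ⟨b, hb⟩ := (Set.ncard_pos (Set.toFinite _)).1 (by omega : 0 < ((link G v).neighborSet a).ncard)
        have := hS a b hb.1 h2
        exact ⟨b, by omega, hb.2.2⟩
      · exact ⟨a, h2, ha⟩

lemma matching_card [Fintype V] {G : SimpleGraph V} {M : G.Subgraph} (h : M.IsMatching) :
    M.verts.ncard = 2 * M.edgeSet.ncard := by
  classical
  have h1 := M.spanningCoe.sum_degrees_eq_twice_card_edges
  have h2 : M.spanningCoe.edgeFinset.card = M.edgeSet.ncard := by
    rw [← Set.ncard_coe_finset, SimpleGraph.coe_edgeFinset]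
    rfl
  have h3 : ∀ v, M.spanningCoe.degree v = if v ∈ M.verts then 1 else 0 := by
    intro v
    split_ifs with hv
    · obtain ⟨u, hu, huu⟩ := h hv
      rw [← SimpleGraph.card_neighborFinset_eq_degree, Finset.card_eq_one]
      refine ⟨u, ?_⟩
      ext z
      simp only [SimpleGraph.mem_neighborFinset, Finset.mem_singleton]
      exact ⟨fun hz => huu z hz, fun hz => hz ▸ hu⟩
    · rw [← SimpleGraph.card_neighborFinset_eq_degree, Finset.card_eq_zero]
      ext z
      simp only [SimpleGraph.mem_neighborFinset, Finset.notMem_empty, iff_false]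
      exact fun hz => hv (M.edge_vert hz)
  simp only [h3, Finset.sum_boole, h2] at h1
  rw [← h1, ← Set.ncard_coe_finset]
  simp

/-- add `k` universal vertices -/
def ext (H : SimpleGraph V) (k : ℕ) : SimpleGraph (V ⊕ Fin k) where
  Adj a b := a ≠ b ∧ ∀ x y, a = .inl x → b = .inl y → H.Adj x y
  symm := ⟨fun _ _ h => ⟨h.1.symm, fun x y hx hy => (h.2 y x hy hx).symm⟩⟩
  loopless := ⟨fun _ h => h.1 rfl⟩

lemma ext_no_pm [Fintype V] {H : SimpleGraph V} {k ν : ℕ}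
    (hν : ∀ N : H.Subgraph, N.IsMatching → N.edgeSet.ncard ≤ ν)
    (hn : 2 * ν + k < Fintype.card V) (M : (ext H k).Subgraph) : ¬ M.IsPerfectMatching := by
  intro hM
  rw [SimpleGraph.Subgraph.isPerfectMatching_iff] at hM
  let N : H.Subgraph :=
    { verts := {v | ∃ u, M.Adj (.inl v) (.inl u)}
      Adj := fun a b => M.Adj (.inl a) (.inl b)
      adj_sub := fun {a b} h => (M.adj_sub h).2 a b rfl rfl
      edge_vert := fun {a b} h => ⟨b, h⟩
      symm := ⟨fun a b h => M.adj_symm h⟩ }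
  have hN : N.IsMatching := by
    rintro v ⟨u, hu⟩
    exact ⟨u, hu, fun z hz => Sum.inl_injective ((hM (.inl v)).unique hz hu)⟩
  have h1 := hν N hN
  have h2 := matching_card hN
  set Z : Set V := {v | ∃ i, M.Adj (.inl v) (.inr i)}
  have hZ : Z.ncard ≤ k := by
    have : ∀ v : V, ∃ i : Option (Fin k), v ∈ Z → ∃ j, i = some j ∧ M.Adj (.inl v) (.inr j) := by
      intro v
      by_cases hv : v ∈ Z
      · obtain ⟨i, hi⟩ := hv
        exact ⟨some i, fun _ => ⟨i, rfl, hi⟩⟩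
      · exact ⟨none, fun h => absurd h hv⟩
    choose f hf using this
    have hk : (Set.range (some : Fin k → Option (Fin k))).ncard = k := by
      rw [← Set.image_univ, Set.ncard_image_of_injective _ (Option.some_injective _)]
      simp
    rw [← hk]
    refine Set.ncard_le_ncard_of_injOn f ?_ ?_ (Set.toFinite _)
    · intro v hv
      obtain ⟨j, hj, _⟩ := hf v hv
      exact ⟨j, hj.symm⟩
    · intro v hv v' hv' he
      obtain ⟨j, hj, h1⟩ := hf v hv
      obtain ⟨j', hj', h2⟩ := hf v' hv'
      have : j = j' := by
        rw [hj, hj'] at he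
        exact Option.some_injective _ he
      subst this
      exact Sum.inl_injective ((hM (.inr j)).unique (M.adj_symm h1) (M.adj_symm h2))
  have hU : (Set.univ : Set V) ⊆ N.verts ∪ Z := by
    intro v _
    obtain ⟨u, hu, -⟩ := hM (.inl v)
    rcases u with u | i
    · exact .inl ⟨u, hu⟩
    · exact .inr ⟨i, hu⟩
  have h3 := (Set.ncard_le_ncard hU).trans (Set.ncard_union_le _ _)
  rw [Set.ncard_univ, Nat.card_eq_fintype_card] at h3
  omega

lemma tutte_berge [Fintype V] {H : SimpleGraph V} {ν : ℕ}
    (hν : ∀ N : H.Subgraph, N.IsMatching → N.edgeSet.ncard ≤ ν)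
    (hev : Even (Fintype.card V)) (hn : 2 * ν + 2 ≤ Fintype.card V) :
    ∃ U : Set V, 3 * U.ncard + {a | a ∉ U ∧ ∃ b, H.Adj a b ∧ b ∉ U}.ncard ≤ 3 * ν := by
  classical
  obtain ⟨k, hk⟩ : ∃ k, Fintype.card V = 2 * ν + 2 + k := ⟨_, (Nat.add_sub_cancel' hn).symm⟩
  have hno : ¬ ∃ M : (ext H k).Subgraph, M.IsPerfectMatching := by
    rintro ⟨M, hM⟩
    exact ext_no_pm hν (by omega) M hM
  rw [SimpleGraph.tutte] at hno
  push Not at hno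
  obtain ⟨T, hT⟩ := hno
  unfold SimpleGraph.IsTutteViolator at hT
  set D := (⊤ : (ext H k).Subgraph).deleteVerts T with hD
  have hmem : ∀ z, z ∈ D.verts ↔ z ∉ T := by intro z; simp [hD]
  have hadj : ∀ a b : D.verts, (ext H k).Adj a b → D.coe.Adj a b := by
    intro a b hab
    have ha := (hmem _).1 a.2
    have hb := (hmem _).1 b.2
    simp [hD, hab, ha, hb]
  have hDc : Nat.card D.verts + T.ncard = Fintype.card V + k := by
    have : D.verts = Tᶜ := by ext z; exact hmem z
    rw [this, Nat.card_coe_set_eq, Set.ncard_compl_add_ncard]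
    simp
  have hpar := D.coe.odd_ncard_oddComponents
  have hodd : T.ncard + 2 ≤ D.coe.oddComponents.ncard := by
    rw [Nat.odd_iff, Nat.odd_iff] at hpar
    rw [Nat.even_iff] at hev
    generalize D.coe.oddComponents.ncard = x at *
    omega
  have hinr : ∀ i, Sum.inr i ∈ T := by
    intro i
    by_contra hi
    have hi' : Sum.inr i ∈ D.verts := (hmem _).2 hi
    have hall : ∀ c : D.coe.ConnectedComponent, c = D.coe.connectedComponentMk ⟨_, hi'⟩ := by
      intro c
      induction c using SimpleGraph.ConnectedComponent.ind with
      | _ z =>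
      rw [SimpleGraph.ConnectedComponent.eq]
      by_cases hz : z = ⟨_, hi'⟩
      · rw [hz]
      · refine SimpleGraph.Adj.reachable (hadj _ _ ⟨fun h => hz (Subtype.ext h), ?_⟩)
        intro x y _ h
        cases h
    have : D.coe.oddComponents ⊆ {D.coe.connectedComponentMk ⟨_, hi'⟩} := fun c _ => hall c
    have := Set.ncard_le_ncard this
    rw [Set.ncard_singleton] at this
    omega
  set U : Set V := Sum.inl ⁻¹' T with hU
  have hTU : T.ncard = U.ncard + k := by
    have : T = Sum.inl '' U ∪ Set.range Sum.inr := by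
      ext z
      rcases z with z | z
      · simp [hU]
      · simp [hinr]
    rw [this, Set.ncard_union_eq, Set.ncard_image_of_injective _ Sum.inl_injective,
      ← Set.image_univ, Set.ncard_image_of_injective _ Sum.inr_injective]
    · simp
    · rw [Set.disjoint_left]
      rintro _ ⟨a, _, rfl⟩ ⟨b, hb⟩
      cases hb
  refine ⟨U, ?_⟩
  let φ : {a : V // a ∉ U} → D.verts := fun a => ⟨.inl a.1, (hmem _).2 a.2⟩
  have hφi : Function.Injective φ := by
    intro a b h
    exact Subtype.ext (Sum.inl_injective (congrArg Subtype.val h))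
  have hφs : Function.Surjective φ := by
    rintro ⟨z | i, hz⟩
    · exact ⟨⟨z, (hmem _).1 hz⟩, rfl⟩
    · exact absurd (hinr i) ((hmem _).1 hz)
  let c : {a : V // a ∉ U} → D.coe.ConnectedComponent := fun a => D.coe.connectedComponentMk (φ a)
  let g : {a : V // a ∉ U} → ℕ := fun a => if ∃ b, H.Adj a.1 b ∧ b ∉ U then 1 else 3
  have hg1 : ∀ a, 1 ≤ g a := by
    intro a
    simp only [g]
    split_ifs <;> omega
  have hfib : ∀ C ∈ D.coe.oddComponents, 3 ≤ ∑ a with c a = C, g a := by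
    intro C hC
    have hC : Odd C.supp.ncard := hC
    have hcard : (Finset.univ.filter (fun a => c a = C)).card = C.supp.ncard := by
      have : C.supp = φ '' (Finset.univ.filter (fun a => c a = C) : Finset _) := by
        ext z
        obtain ⟨a, rfl⟩ := hφs z
        simp only [SimpleGraph.ConnectedComponent.mem_supp_iff, hφi.mem_set_image]
        simp [c]
      rw [this, Set.ncard_image_of_injective _ hφi, Set.ncard_coe_finset]
    rw [← hcard] at hC
    have hle : (Finset.univ.filter (fun a => c a = C)).card ≤ ∑ a with c a = C, g a := by
      rw [Finset.card_eq_sum_ones]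
      exact Finset.sum_le_sum fun a _ => hg1 a
    by_cases h1 : (Finset.univ.filter (fun a => c a = C)).card = 1
    · obtain ⟨a, ha⟩ := Finset.card_eq_one.1 h1
      rw [ha, Finset.sum_singleton]
      have haC : c a = C := by
        have : a ∈ Finset.univ.filter (fun a => c a = C) := by rw [ha]; simp
        simpa using this
      have : ¬ ∃ b, H.Adj a.1 b ∧ b ∉ U := by
        rintro ⟨b, hab, hb⟩
        have hcb : c ⟨b, hb⟩ = C := by
          rw [← haC]
          refine SimpleGraph.ConnectedComponent.eq.2 (SimpleGraph.Adj.reachable (hadj _ _ ?_))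
          refine ⟨fun h => H.ne_of_adj hab (Sum.inl_injective h).symm, ?_⟩
          rintro x y hx hy
          cases hx
          cases hy
          exact hab.symm
        have : (⟨b, hb⟩ : {a : V // a ∉ U}) ∈ Finset.univ.filter (fun a => c a = C) := by
          simpa using hcb
        rw [ha, Finset.mem_singleton] at this
        exact H.ne_of_adj hab (congrArg Subtype.val this).symm
      simp [g, this]
    · rw [Nat.odd_iff] at hC
      omega
  have hsum : 3 * D.coe.oddComponents.ncard ≤ ∑ a, g a := by
    rw [← Finset.sum_fiberwise Finset.univ c g, Set.ncard_eq_toFinset_card']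
    calc 3 * D.coe.oddComponents.toFinset.card = ∑ C ∈ D.coe.oddComponents.toFinset, 3 := by
          simp [mul_comm]
      _ ≤ ∑ C ∈ D.coe.oddComponents.toFinset, ∑ a with c a = C, g a :=
          Finset.sum_le_sum fun C hC => hfib C (by simpa using hC)
      _ ≤ _ := Finset.sum_le_sum_of_subset (Finset.subset_univ _)
  set W : Set V := {a | a ∉ U ∧ ∃ b, H.Adj a b ∧ b ∉ U} with hW
  have hWc : W.ncard = ∑ a : {a : V // a ∉ U}, if ∃ b, H.Adj a.1 b ∧ b ∉ U then 1 else 0 := by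
    have : W = Subtype.val '' ((Finset.univ.filter
        (fun a : {a : V // a ∉ U} => ∃ b, H.Adj a.1 b ∧ b ∉ U) : Finset _) : Set {a : V // a ∉ U}) := by
      ext z
      simp [hW]
      exact and_comm
    rw [this, Set.ncard_image_of_injective _ Subtype.val_injective, Set.ncard_coe_finset,
      Finset.sum_boole]
    simp
  have hUc : Fintype.card {a : V // a ∉ U} + U.ncard = Fintype.card V := by
    have := Set.ncard_compl_add_ncard U
    rw [← Nat.card_coe_set_eq, Nat.card_eq_fintype_card (α := V)] at this
    rw [← this, ← Nat.card_eq_fintype_card]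
    rfl
  have hgW : ∑ a, g a + 2 * W.ncard = 3 * Fintype.card {a : V // a ∉ U} := by
    rw [hWc, Finset.mul_sum, ← Finset.sum_add_distrib]
    rw [Finset.sum_congr rfl (g := fun _ => 3)]
    · simp [mul_comm]
    · intro a _
      simp only [g]
      split_ifs <;> rfl
  omega

theorem planar_matching [Fintype V] {H : SimpleGraph V} {ν : ℕ} (hH : H.IsPlanar)
    (hν : ∀ N : H.Subgraph, N.IsMatching → N.edgeSet.ncard ≤ ν)
    (hev : Even (Fintype.card V)) : H.edgeSet.ncard ≤ 3 * ν + 2 * Fintype.card V := by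
  classical
  by_cases hn : 2 * ν + 2 ≤ Fintype.card V
  · obtain ⟨U, hU⟩ := tutte_berge hν hev hn
    set W : Set V := {a | a ∉ U ∧ ∃ b, H.Adj a b ∧ b ∉ U} with hW
    have hWU : ∀ a ∈ W, a ∉ U := fun a ha => ha.1
    have := weight_bound (fun a => 2 + (if a ∈ U then 3 else 0) + (if a ∈ W then 1 else 0)) ?_ _
      Finset.univ rfl H hH (by simp) ?_
    · rw [Finset.sum_add_distrib, Finset.sum_add_distrib] at this
      have e1 : ∑ a : V, (if a ∈ U then 3 else 0) = 3 * U.ncard := by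
        rw [← Finset.sum_filter, Finset.sum_const, Set.ncard_eq_toFinset_card', smul_eq_mul, mul_comm]
        congr 2
        ext; simp
      have e2 : ∑ a : V, (if a ∈ W then 1 else 0) = W.ncard := by
        rw [← Finset.sum_filter, Finset.sum_const, Set.ncard_eq_toFinset_card', smul_eq_mul, mul_one]
        congr 1
        ext; simp
      rw [e1, e2] at this
      simp only [Finset.sum_const, Finset.card_univ, smul_eq_mul] at this
      omega
    · intro a
      have := hWU a
      by_cases h1 : a ∈ U <;> by_cases h2 : a ∈ W <;> simp_all
    · intro a b hab h
      have ha : a ∉ U := by intro h'; simp [h'] at h; omega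
      have haW : a ∉ W := by intro h'; simp [h'] at h; omega
      have hb : b ∈ U := by
        by_contra hb
        exact haW ⟨ha, b, hab, hb⟩
      have hbW : b ∉ W := fun h => hWU b h hb
      simp [hb, hbW]
  · have := weight_bound (fun _ => 3) (by simp) _ Finset.univ rfl H hH (by simp) (by simp)
    simp only [Finset.sum_const, Finset.card_univ, smul_eq_mul] at this
    rw [Nat.even_iff] at hev
    omega

end PM

/-- Let `G'` be a graph on the vertex set `V'` containing a perfect matching
`M`, let `E*` be an edge set on `V'` (of size `OPT`) such that the graph
`(V', E* \ M)` is planar, and let `M''` be a maximum matching of the graph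
`(V', E' \ M)` for some edge set `E' ⊇ E*`. Then
`OPT ≤ 3|M''| + 5|M| ≤ 5|M ∪ M''|`. -/
theorem stmt_11 {V' : Type*} [Fintype V'] (G' : SimpleGraph V')
    (M : G'.Subgraph) (hM : M.IsPerfectMatching)
    (Estar E' : Set (Sym2 V'))
    (hloopless : ∀ e ∈ Estar, ¬ e.IsDiag)
    (hplanar : (SimpleGraph.fromEdgeSet (Estar \ M.edgeSet)).IsPlanar)
    (hE' : Estar ⊆ E')
    (M'' : (SimpleGraph.fromEdgeSet (E' \ M.edgeSet)).Subgraph)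
    (hM'' : M''.IsMatching)
    (hmax : ∀ N : (SimpleGraph.fromEdgeSet (E' \ M.edgeSet)).Subgraph,
      N.IsMatching → N.edgeSet.ncard ≤ M''.edgeSet.ncard) :
    (Estar.ncard : ℝ) ≤ 3 * M''.edgeSet.ncard + 5 * M.edgeSet.ncard ∧
    (3 * M''.edgeSet.ncard + 5 * M.edgeSet.ncard : ℝ) ≤
      5 * ((M.edgeSet ∪ M''.edgeSet).ncard : ℝ) := by
  have hVc : Fintype.card V' = 2 * M.edgeSet.ncard := by
    rw [← PM.matching_card hM.1, hM.2.verts_eq_univ, Set.ncard_univ, Nat.card_eq_fintype_card]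
  have hle : SimpleGraph.fromEdgeSet (Estar \ M.edgeSet) ≤
      SimpleGraph.fromEdgeSet (E' \ M.edgeSet) :=
    SimpleGraph.fromEdgeSet_mono (fun e he => ⟨hE' he.1, he.2⟩)
  have hedge : (SimpleGraph.fromEdgeSet (Estar \ M.edgeSet)).edgeSet = Estar \ M.edgeSet := by
    rw [SimpleGraph.edgeSet_fromEdgeSet]
    ext e
    constructor
    · exact fun h => h.1
    · exact fun h => ⟨h, hloopless e h.1⟩
  have hmain := PM.planar_matching (ν := M''.edgeSet.ncard) hplanar (by
    intro N hN
    have h1 := hmax _ (hN.map_ofLE hle)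
    refine le_trans (le_of_eq ?_) h1
    congr 1
    ext e
    induction e with
    | _ a b => simp [SimpleGraph.Subgraph.mem_edgeSet]) (by rw [hVc]; simp)
  rw [hedge, hVc] at hmain
  have h1 : Estar.ncard ≤ (Estar \ M.edgeSet).ncard + M.edgeSet.ncard := by
    refine (Set.ncard_le_ncard (t := (Estar \ M.edgeSet) ∪ M.edgeSet) ?_).trans
      (Set.ncard_union_le _ _)
    intro e he
    by_cases h : e ∈ M.edgeSet
    · exact .inr h
    · exact .inl ⟨he, h⟩
  have hdis : Disjoint M.edgeSet M''.edgeSet := by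
    rw [Set.disjoint_left]
    intro e he he'
    have := M''.edgeSet_subset he'
    rw [SimpleGraph.edgeSet_fromEdgeSet] at this
    exact this.1.2 he
  rw [Set.ncard_union_eq hdis]
  constructor
  · have : Estar.ncard ≤ 3 * M''.edgeSet.ncard + 5 * M.edgeSet.ncard := by omega
    exact_mod_cast this
  · push_cast
    have : (0 : ℝ) ≤ M''.edgeSet.ncard := by positivity
    linarith
end

section
/- Every connected planar graph with n ≥ 10 vertices and minimum degree at least 3 contains a matching of size at least ⌈(n + 2)/3⌉. -/
open SimpleGraph

structure K33Sys {V : Type*} [DecidableEq V] (G : SimpleGraph V) (I : Finset V) (B : V → Set V)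
    (A : Finset V) (T : V → Finset V) : Prop where
  conn : ∀ i ∈ I, (G.induce (B i)).Connected
  disj : ∀ i ∈ I, ∀ j ∈ I, i ≠ j → Disjoint (B i) (B j)
  notmem : ∀ a ∈ A, ∀ i ∈ I, a ∉ B i
  sub : ∀ a ∈ A, T a ⊆ I
  card : ∀ a ∈ A, (T a).card = 3
  adj : ∀ a ∈ A, ∀ i ∈ T a, ∃ v ∈ B i, G.Adj a v

lemma conn_singleton {V : Type*} (G : SimpleGraph V) (a : V) : (G.induce {a}).Connected := by
  have : Subsingleton ({a} : Set V) := inferInstance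
  exact { preconnected := fun x y => by rw [Subsingleton.elim x y], nonempty := ⟨⟨a, rfl⟩⟩ }

lemma conn_union_adj {V : Type*} {G : SimpleGraph V} {s t : Set V}
    (hs : (G.induce s).Connected) (ht : (G.induce t).Connected) {u v : V} (hu : u ∈ s) (hv : v ∈ t)
    (h : G.Adj u v) : (G.induce (s ∪ t)).Connected := by
  have h1 := SimpleGraph.induce_pair_connected_of_adj h
  have h2 := SimpleGraph.induce_union_connected hs.preconnected h1.preconnected ⟨u, hu, by simp⟩
  have h3 := SimpleGraph.induce_union_connected h2.preconnected ht.preconnected ⟨v, by simp, hv⟩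
  have : (s ∪ {u, v}) ∪ t = s ∪ t := by
    ext w; simp only [Set.mem_union, Set.mem_insert_iff, Set.mem_singleton_iff]
    constructor
    · rintro ((h | rfl | rfl) | h) <;> tauto
    · tauto
  rwa [this] at h3

lemma hasMinor_K33 {V : Type*} (G : SimpleGraph V) (P Q : Fin 3 → Set V)
    (hP : ∀ i, (G.induce (P i)).Connected) (hQ : ∀ i, (G.induce (Q i)).Connected)
    (dP : ∀ i j, i ≠ j → Disjoint (P i) (P j)) (dQ : ∀ i j, i ≠ j → Disjoint (Q i) (Q j))
    (dPQ : ∀ i j, Disjoint (P i) (Q j))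
    (hadj : ∀ i j, ∃ q ∈ Q j, ∃ p ∈ P i, G.Adj q p) :
    G.HasMinor (completeBipartiteGraph (Fin 3) (Fin 3)) := by
  refine ⟨Sum.elim P Q, ?_, ?_, ?_, ?_⟩
  · rintro (i | i)
    · obtain ⟨⟨x, hx⟩⟩ := (hP i).nonempty; exact ⟨x, hx⟩
    · obtain ⟨⟨x, hx⟩⟩ := (hQ i).nonempty; exact ⟨x, hx⟩
  · rintro (i | i)
    · exact hP i
    · exact hQ i
  · rintro (i | i) (j | j) h
    · exact dP i j (by rintro rfl; exact h rfl)
    · exact dPQ i j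
    · exact (dPQ j i).symm
    · exact dQ i j (by rintro rfl; exact h rfl)
  · rintro (i | i) (j | j) h
    · simp at h
    · obtain ⟨q, hq, p, hp, h⟩ := hadj i j
      exact ⟨p, hp, q, hq, h.symm⟩
    · obtain ⟨q, hq, p, hp, h⟩ := hadj j i
      exact ⟨q, hq, p, hp, h⟩
    · simp at h

lemma K33Sys.core {V : Type*} [DecidableEq V] {G : SimpleGraph V} {I : Finset V} {B : V → Set V}
    {A : Finset V} {T : V → Finset V} (S : K33Sys G I B A T) {a b x y z : V} (ha : a ∈ A) (hb : b ∈ A)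
    (hab : a ≠ b) (hxy : x ≠ y) (hxz : x ≠ z) (hyz : y ≠ z)
    (hTa : ∀ i, i = x ∨ i = y ∨ i = z → i ∈ T a) (hTb : ∀ i, i = x ∨ i = y ∨ i = z → i ∈ T b)
    (C : Set V) (hC : (G.induce C).Connected) (haC : a ∉ C) (hbC : b ∉ C)
    (hCd : ∀ i, i = x ∨ i = y ∨ i = z → Disjoint (B i) C)
    (hCa : ∀ i, i = x ∨ i = y ∨ i = z → ∃ q ∈ C, ∃ p ∈ B i, G.Adj q p) :
    G.HasMinor (completeBipartiteGraph (Fin 3) (Fin 3)) := by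
  have hI : ∀ i, i = x ∨ i = y ∨ i = z → i ∈ I := fun i hi => S.sub a ha (hTa i hi)
  have hv : ∀ i : Fin 3, (![x, y, z] i) = x ∨ ![x, y, z] i = y ∨ ![x, y, z] i = z := by
    intro i; fin_cases i <;> simp
  have hinj : ∀ i j : Fin 3, i ≠ j → ![x, y, z] i ≠ ![x, y, z] j := by
    intro i j h; fin_cases i <;> fin_cases j <;> simp_all [eq_comm]
  refine hasMinor_K33 G (fun i => B (![x, y, z] i)) ![{a}, {b}, C] ?_ ?_ ?_ ?_ ?_ ?_
  · exact fun i => S.conn _ (hI _ (hv i))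
  · intro i; fin_cases i
    · exact conn_singleton G a
    · exact conn_singleton G b
    · exact hC
  · exact fun i j h => S.disj _ (hI _ (hv i)) _ (hI _ (hv j)) (hinj i j h)
  · intro i j h; fin_cases i <;> fin_cases j <;> simp_all [eq_comm]
  · intro i j
    have h1 := S.notmem a ha _ (hI _ (hv i))
    have h2 := S.notmem b hb _ (hI _ (hv i))
    have h3 := hCd _ (hv i)
    fin_cases j
    · simpa using h1
    · simpa using h2
    · exact h3
  · intro i j
    have h1 := S.adj a ha _ (hTa _ (hv i))
    have h2 := S.adj b hb _ (hTb _ (hv i))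
    have h3 := hCa _ (hv i)
    fin_cases j
    · exact ⟨a, rfl, h1⟩
    · exact ⟨b, rfl, h2⟩
    · exact h3

lemma K33Sys.triple {V : Type*} [DecidableEq V] {G : SimpleGraph V} {I : Finset V} {B : V → Set V}
    {A : Finset V} {T : V → Finset V} (S : K33Sys G I B A T) {x y z : V}
    (hxy : x ≠ y) (hxz : x ≠ z) (hyz : y ≠ z)
    (h3 : 3 ≤ (A.filter (fun a => T a = {x, y, z})).card) :
    G.HasMinor (completeBipartiteGraph (Fin 3) (Fin 3)) := by
  obtain ⟨a, b, c, ha, hb, hc, hab, hac, hbc⟩ := Finset.two_lt_card_iff.mp h3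
  simp only [Finset.mem_filter] at ha hb hc
  refine S.core ha.1 hb.1 hab hxy hxz hyz ?_ ?_ {c} (conn_singleton G c) (by simpa using hac)
    (by simpa using hbc) ?_ ?_
  · intro i hi; rw [ha.2]; simpa using hi
  · intro i hi; rw [hb.2]; simpa using hi
  · intro i hi
    have : i ∈ T c := by rw [hc.2]; simpa using hi
    simpa using S.notmem c hc.1 i (S.sub c hc.1 this)
  · intro i hi
    have : i ∈ T c := by rw [hc.2]; simpa using hi
    exact ⟨c, rfl, S.adj c hc.1 i this⟩

/-- two copies of `xyz`, one of `xyw`, one of `xzw` -/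
lemma K33Sys.quad {V : Type*} [DecidableEq V] {G : SimpleGraph V} {I : Finset V} {B : V → Set V}
    {A : Finset V} {T : V → Finset V} (S : K33Sys G I B A T) {x y z w : V}
    (hxy : x ≠ y) (hxz : x ≠ z) (hyz : y ≠ z) (hxw : x ≠ w) (hyw : y ≠ w) (hzw : z ≠ w)
    (h2 : 2 ≤ (A.filter (fun a => T a = {x, y, z})).card)
    (hq : 1 ≤ (A.filter (fun a => T a = {x, y, w})).card)
    (hr : 1 ≤ (A.filter (fun a => T a = {x, z, w})).card) :
    G.HasMinor (completeBipartiteGraph (Fin 3) (Fin 3)) := by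
  obtain ⟨a, b, ha, hb, hab⟩ := Finset.one_lt_card_iff.mp h2
  obtain ⟨c, hc⟩ := Finset.card_pos.mp hq
  obtain ⟨d, hd⟩ := Finset.card_pos.mp hr
  simp only [Finset.mem_filter] at ha hb hc hd
  have hwT : w ∉ ({x, y, z} : Finset V) := by simp [hxw.symm, hyw.symm, hzw.symm]
  have hwc : w ∈ T c := by rw [hc.2]; simp
  have hwd : w ∈ T d := by rw [hd.2]; simp
  have hwI := S.sub c hc.1 hwc
  have hwa : w ∉ T a := by rw [ha.2]; exact hwT
  have hwb : w ∉ T b := by rw [hb.2]; exact hwT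
  obtain ⟨vc, hvc, hvc'⟩ := S.adj c hc.1 w hwc
  obtain ⟨vd, hvd, hvd'⟩ := S.adj d hd.1 w hwd
  have hC1 := conn_union_adj (conn_singleton G c) (S.conn w hwI) (by simp) hvc hvc'
  have hC2 := conn_union_adj (conn_singleton G d) hC1 (by simp) (Or.inr hvd) hvd'
  have hTa : ∀ i, i = x ∨ i = y ∨ i = z → i ∈ T a := by
    intro i hi; rw [ha.2]; simpa using hi
  refine S.core ha.1 hb.1 hab hxy hxz hyz hTa ?_ _ hC2 ?_ ?_ ?_ ?_
  · intro i hi; rw [hb.2]; simpa using hi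
  · rintro (h | h | h)
    · rw [Set.mem_singleton_iff] at h; subst h; exact hwa hwd
    · rw [Set.mem_singleton_iff] at h; subst h; exact hwa hwc
    · exact S.notmem a ha.1 w hwI h
  · rintro (h | h | h)
    · rw [Set.mem_singleton_iff] at h; subst h; exact hwb hwd
    · rw [Set.mem_singleton_iff] at h; subst h; exact hwb hwc
    · exact S.notmem b hb.1 w hwI h
  · intro i hi
    have hiI := S.sub a ha.1 (hTa i hi)
    have hiw : i ≠ w := by rintro rfl; exact hwa (hTa i hi)
    simp only [Set.disjoint_union_right, Set.disjoint_singleton_right]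
    exact ⟨S.notmem d hd.1 i hiI, S.notmem c hc.1 i hiI, S.disj i hiI w hwI hiw⟩
  · rintro i (rfl | rfl | rfl)
    · exact ⟨c, by simp, S.adj c hc.1 _ (by rw [hc.2]; simp)⟩
    · exact ⟨c, by simp, S.adj c hc.1 _ (by rw [hc.2]; simp)⟩
    · exact ⟨d, by simp, S.adj d hd.1 _ (by rw [hd.2]; simp)⟩

/-- merging `x` into `y` -/
lemma K33Sys.merge {V : Type*} [DecidableEq V] {G : SimpleGraph V} {I : Finset V} {B : V → Set V}
    {A : Finset V} {T : V → Finset V} (S : K33Sys G I B A T) {a x y : V} (ha : a ∈ A)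
    (hx : x ∈ T a) (hy : y ∈ T a) (hxy : x ≠ y) :
    K33Sys G (I.erase x) (fun i => if i = y then (B x ∪ {a}) ∪ B y else B i)
      (A.filter (fun c => ¬ (x ∈ T c ∧ y ∈ T c)))
      (fun c => if x ∈ T c then insert y ((T c).erase x) else T c) := by
  have hxI := S.sub a ha hx
  have hyI := S.sub a ha hy
  obtain ⟨vx, hvx, hax⟩ := S.adj a ha x hx
  obtain ⟨vy, hvy, hay⟩ := S.adj a ha y hy
  have hcon : (G.induce ((B x ∪ {a}) ∪ B y)).Connected :=
    conn_union_adj (conn_union_adj (S.conn x hxI) (conn_singleton G a) hvx rfl hax.symm)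
      (S.conn y hyI) (Or.inr rfl) hvy hay
  have hdis : ∀ i ∈ I, i ≠ x → i ≠ y → Disjoint ((B x ∪ {a}) ∪ B y) (B i) := by
    intro i hi hix hiy
    simp only [Set.disjoint_union_left, Set.disjoint_singleton_left]
    exact ⟨⟨S.disj _ hxI _ hi hix.symm, S.notmem a ha i hi⟩, S.disj _ hyI _ hi hiy.symm⟩
  constructor
  · intro i hi
    by_cases h : i = y
    · exact Eq.subst (motive := fun s => (G.induce s).Connected) (if_pos h).symm hcon
    · exact Eq.subst (motive := fun s => (G.induce s).Connected) (if_neg h).symm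
        (S.conn i (Finset.mem_of_mem_erase hi))
  · intro i hi j hj hij
    have hi' := Finset.mem_erase.mp hi
    have hj' := Finset.mem_erase.mp hj
    by_cases h : i = y
    · have h' : j ≠ y := by rintro rfl; exact hij h
      simp only [h, h', if_true, if_false]
      exact hdis j hj'.2 hj'.1 h'
    · by_cases h' : j = y
      · simp only [h, h', if_true, if_false]
        exact (hdis i hi'.2 hi'.1 h).symm
      · simp only [h, h', if_false]
        exact S.disj i hi'.2 j hj'.2 hij
  · intro c hc i hi
    rw [Finset.mem_filter] at hc
    have hi' := Finset.mem_erase.mp hi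
    by_cases h : i = y
    · simp only [h, if_true]
      rintro ((h1 | h1) | h1)
      · exact S.notmem c hc.1 x hxI h1
      · rw [Set.mem_singleton_iff] at h1; subst h1; exact hc.2 ⟨hx, hy⟩
      · exact S.notmem c hc.1 y hyI h1
    · simp only [h, if_false]; exact S.notmem c hc.1 i hi'.2
  · intro c hc i hi
    rw [Finset.mem_filter] at hc
    have := @(S.sub c hc.1)
    split_ifs at hi with h
    · rw [Finset.mem_insert, Finset.mem_erase] at hi
      rw [Finset.mem_erase]
      rcases hi with rfl | hi
      · exact ⟨hxy.symm, hyI⟩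
      · exact ⟨hi.1, this hi.2⟩
    · rw [Finset.mem_erase]
      exact ⟨by rintro rfl; exact h hi, this hi⟩
  · intro c hc
    rw [Finset.mem_filter] at hc
    have := S.card c hc.1
    split_ifs with h
    · rw [Finset.card_insert_of_notMem, Finset.card_erase_of_mem h, this]
      intro h'
      exact hc.2 ⟨h, Finset.mem_of_mem_erase h'⟩
    · exact this
  · intro c hc i hi
    rw [Finset.mem_filter] at hc
    by_cases hiy : i = y
    · simp only [hiy, if_true]
      by_cases h : x ∈ T c
      · obtain ⟨v, hv, hcv⟩ := S.adj c hc.1 x h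
        exact ⟨v, Or.inl (Or.inl hv), hcv⟩
      · rw [if_neg h, hiy] at hi
        obtain ⟨v, hv, hcv⟩ := S.adj c hc.1 y hi
        exact ⟨v, Or.inr hv, hcv⟩
    · simp only [hiy, if_false]
      apply S.adj c hc.1 i
      split_ifs at hi with h
      · rw [Finset.mem_insert, Finset.mem_erase] at hi
        exact (hi.resolve_left hiy).2
      · exact hi

lemma K33Sys.mono {V : Type*} [DecidableEq V] {G : SimpleGraph V} {I : Finset V} {B : V → Set V}
    {A : Finset V} {T : V → Finset V} (S : K33Sys G I B A T) {A' : Finset V} (h : A' ⊆ A) :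
    K33Sys G I B A' T :=
  ⟨S.conn, S.disj, fun a ha => S.notmem a (h ha), fun a ha => S.sub a (h ha),
    fun a ha => S.card a (h ha), fun a ha => S.adj a (h ha)⟩

lemma K33Sys.minor {V : Type*} [DecidableEq V] {G : SimpleGraph V} (k : ℕ) :
    ∀ {I : Finset V} {B : V → Set V} {A : Finset V} {T : V → Finset V}, K33Sys G I B A T →
      I.card = k → I.Nonempty → 2 * I.card ≤ A.card + 1 →
      G.HasMinor (completeBipartiteGraph (Fin 3) (Fin 3)) := by
  induction k with
  | zero => intro I B A T S h1 h2; simp [Finset.card_eq_zero.mp h1] at h2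
  | succ k ih =>
    intro I B A₀ T S₀ hk hI hc₀
    obtain ⟨A, hAA, hc⟩ := Finset.exists_subset_card_eq (s := A₀) (n := 2 * I.card - 1) (by omega)
    have S := S₀.mono hAA
    -- a nonempty A forces three indices
    have hI3 : 3 ≤ I.card := by
      obtain ⟨a, ha⟩ : A.Nonempty := by
        rw [← Finset.card_pos]; have := Finset.card_pos.mpr hI; omega
      rw [← S.card a ha]; exact Finset.card_le_card (S.sub a ha)
    -- low degree vertex
    obtain ⟨x, hxI, hx⟩ : ∃ x ∈ I, (A.filter (fun a => x ∈ T a)).card ≤ 5 := by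
      by_contra! hcon
      have h1 : ∑ x ∈ I, (A.filter (fun a => x ∈ T a)).card = ∑ a ∈ A, (I.filter (fun x => x ∈ T a)).card :=
        Finset.sum_card_bipartiteAbove_eq_sum_card_bipartiteBelow (fun x a => x ∈ T a)
      have h2 : ∑ a ∈ A, (I.filter (fun x => x ∈ T a)).card = ∑ a ∈ A, 3 := by
        refine Finset.sum_congr rfl fun a ha => ?_
        rw [← S.card a ha]
        congr 1
        ext i
        simp only [Finset.mem_filter]
        exact ⟨fun h => h.2, fun h => ⟨S.sub a ha h, h⟩⟩
      have h3 : ∑ x ∈ I, 6 ≤ ∑ x ∈ I, (A.filter (fun a => x ∈ T a)).card :=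
        Finset.sum_le_sum fun i hi => hcon i hi
      simp only [Finset.sum_const, smul_eq_mul] at h2 h3
      omega
    have hcI : (I.erase x).card = k := by rw [Finset.card_erase_of_mem hxI]; omega
    have hIe : (I.erase x).Nonempty := by rw [← Finset.card_pos]; omega
    by_cases hlow : ∃ a ∈ A, x ∈ T a ∧ ∃ y ∈ T a, x ≠ y ∧
        (A.filter (fun c => x ∈ T c ∧ y ∈ T c)).card ≤ 2
    · obtain ⟨a, ha, hxa, y, hya, hxy, hle⟩ := hlow
      refine ih (S.merge ha hxa hya hxy) hcI hIe ?_
      have := Finset.card_filter_add_card_filter_not (s := A) (fun c => x ∈ T c ∧ y ∈ T c)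
      omega
    push Not at hlow
    by_cases hzero : ∀ a ∈ A, x ∉ T a
    · refine ih (I := I.erase x) (B := B) (A := A) (T := T) ?_ hcI hIe (by omega)
      refine ⟨fun i hi => S.conn i (Finset.mem_of_mem_erase hi),
        fun i hi j hj => S.disj i (Finset.mem_of_mem_erase hi) j (Finset.mem_of_mem_erase hj),
        fun a ha i hi => S.notmem a ha i (Finset.mem_of_mem_erase hi), ?_, S.card, S.adj⟩
      intro a ha i hi
      exact Finset.mem_erase.mpr ⟨by rintro rfl; exact hzero a ha hi, S.sub a ha hi⟩
    push Not at hzero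
    obtain ⟨a, ha, hxa⟩ := hzero
    set D := A.filter (fun c => x ∈ T c) with hD
    set L := D.biUnion (fun c => (T c).erase x) with hL
    have hLdeg : ∀ y ∈ L, 3 ≤ (D.filter (fun c => y ∈ (T c).erase x)).card := by
      intro y hy
      simp only [hL, hD, Finset.mem_biUnion, Finset.mem_filter, Finset.mem_erase] at hy
      obtain ⟨c, ⟨hcA, hxc⟩, hyx, hyc⟩ := hy
      have := hlow c hcA hxc y hyc hyx.symm
      have h2 : A.filter (fun c => x ∈ T c ∧ y ∈ T c) ⊆ D.filter (fun c => y ∈ (T c).erase x) := by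
        intro e he
        simp only [hD, Finset.mem_filter, Finset.mem_erase] at he ⊢
        exact ⟨⟨he.1, he.2.1⟩, hyx, he.2.2⟩
      have := Finset.card_le_card h2
      omega
    have hL3 : L.card ≤ 3 := by
      have h1 : ∑ y ∈ L, (D.filter (fun c => y ∈ (T c).erase x)).card
          = ∑ c ∈ D, (L.filter (fun y => y ∈ (T c).erase x)).card :=
        Finset.sum_card_bipartiteAbove_eq_sum_card_bipartiteBelow (fun y c => y ∈ (T c).erase x)
      have h2 : ∑ c ∈ D, (L.filter (fun y => y ∈ (T c).erase x)).card ≤ ∑ c ∈ D, 2 := by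
        refine Finset.sum_le_sum fun c hc => ?_
        have hc' := Finset.mem_filter.mp hc
        calc _ ≤ ((T c).erase x).card := Finset.card_le_card (by intro i hi; exact (Finset.mem_filter.mp hi).2)
          _ = 2 := by rw [Finset.card_erase_of_mem hc'.2, S.card c hc'.1]
          _ ≤ 2 := le_rfl
      have h3 : ∑ y ∈ L, 3 ≤ ∑ y ∈ L, (D.filter (fun c => y ∈ (T c).erase x)).card :=
        Finset.sum_le_sum hLdeg
      simp only [Finset.sum_const, smul_eq_mul] at h2 h3
      omega
    have hxL : x ∉ L := by simp [hL]
    have haD : a ∈ D := Finset.mem_filter.mpr ⟨ha, hxa⟩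
    have hsub : ∀ c ∈ D, (T c).erase x ⊆ L := fun c hc =>
      Finset.subset_biUnion_of_mem (fun c => (T c).erase x) hc
    have hTe : ∀ c ∈ D, ((T c).erase x).card = 2 ∧ T c = insert x ((T c).erase x) := by
      intro c hc
      have hc' := Finset.mem_filter.mp hc
      exact ⟨by rw [Finset.card_erase_of_mem hc'.2, S.card c hc'.1], (Finset.insert_erase hc'.2).symm⟩
    have hL2 : 2 ≤ L.card := by rw [← (hTe a haD).1]; exact Finset.card_le_card (hsub a haD)
    have hcase : L.card = 2 ∨ L.card = 3 := by omega
    rcases hcase with h2 | h3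
    · obtain ⟨y, z, hyz, hLe⟩ := Finset.card_eq_two.mp h2
      have hxy : x ≠ y := by rintro rfl; exact hxL (by simp [hLe])
      have hxz : x ≠ z := by rintro rfl; exact hxL (by simp [hLe])
      refine S.triple hxy hxz hyz (le_trans (hLdeg y (by simp [hLe])) (Finset.card_le_card ?_))
      intro c hc
      rw [Finset.mem_filter] at hc
      have h1 : (T c).erase x = L := Finset.eq_of_subset_of_card_le (hsub c hc.1) (by rw [(hTe c hc.1).1, h2])
      refine Finset.mem_filter.mpr ⟨(Finset.mem_filter.mp hc.1).1, ?_⟩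
      rw [(hTe c hc.1).2, h1, hLe]
    · obtain ⟨y, z, w, hyz, hyw, hzw, hLe⟩ := Finset.card_eq_three.mp h3
      have hxy : x ≠ y := by rintro rfl; exact hxL (by simp [hLe])
      have hxz : x ≠ z := by rintro rfl; exact hxL (by simp [hLe])
      have hxw : x ≠ w := by rintro rfl; exact hxL (by simp [hLe])
      -- every triple at x is one of three
      have key : ∀ p q r : V, p ≠ q → p ≠ r → q ≠ r → L = {p, q, r} →
          3 ≤ (A.filter (fun c => T c = {x, p, q})).card + (A.filter (fun c => T c = {x, p, r})).card := by
        intro p q r hpq hpr hqr hLp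
        refine le_trans (hLdeg p (by simp [hLp])) (le_trans (Finset.card_le_card ?_) (Finset.card_union_le _ _))
        intro c hc
        rw [Finset.mem_filter] at hc
        obtain ⟨hcD, hpc⟩ := hc
        obtain ⟨hc2, hcT⟩ := hTe c hcD
        have hs := hsub c hcD
        have hcA := (Finset.mem_filter.mp hcD).1
        have h1 : (((T c).erase x).erase p).card = 1 := by rw [Finset.card_erase_of_mem hpc, hc2]
        obtain ⟨s, hs1⟩ := Finset.card_eq_one.mp h1
        have h4 : (T c).erase x = {p, s} := by
          rw [← Finset.insert_erase hpc, hs1]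
        have hsm : s ∈ ((T c).erase x).erase p := by rw [hs1]; simp
        rw [Finset.mem_erase] at hsm
        have h5 := hs hsm.2
        rw [hLp] at h5
        simp only [Finset.mem_insert, Finset.mem_singleton] at h5
        rw [Finset.mem_union, Finset.mem_filter, Finset.mem_filter, hcT, h4]
        rcases h5 with h5 | h5 | h5
        · exact absurd h5 hsm.1
        · left; rw [h5]; exact ⟨hcA, rfl⟩
        · right; rw [h5]; exact ⟨hcA, rfl⟩
      have e1 : ∀ p q : V, ({x, p, q} : Finset V) = {x, q, p} := by
        intro p q; rw [Finset.pair_comm p q]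
      have k1 := key y z w hyz hyw hzw hLe
      have k2 := key z y w hyz.symm hzw hyw (by rw [hLe]; ext; simp; tauto)
      have k3 := key w y z hyw.symm hzw.symm hyz (by rw [hLe]; ext; simp; tauto)
      rw [e1 z y] at k2
      rw [e1 w y, e1 w z] at k3
      by_cases t1 : 3 ≤ (A.filter (fun c => T c = {x, y, z})).card
      · exact S.triple hxy hxz hyz t1
      by_cases t2 : 3 ≤ (A.filter (fun c => T c = {x, y, w})).card
      · exact S.triple hxy hxw hyw t2
      by_cases t3 : 3 ≤ (A.filter (fun c => T c = {x, z, w})).card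
      · exact S.triple hxz hxw hzw t3
      by_cases t4 : 2 ≤ (A.filter (fun c => T c = {x, y, z})).card
      · exact S.quad hxy hxz hyz hxw hyw hzw t4 (by omega) (by omega)
      · refine S.quad hxy hxw hyw hxz hyz hzw.symm (by omega) (by omega) ?_
        rw [e1 w z]; omega

/-- The bound on independent vertices attached to `S`. -/
lemma indep_bound {V : Type*} [Fintype V] [DecidableEq V] (G : SimpleGraph V) [DecidableRel G.Adj]
    (hG : ¬ G.HasMinor (completeBipartiteGraph (Fin 3) (Fin 3))) (hdeg : ∀ v : V, 3 ≤ G.degree v)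
    (S A : Finset V) (hS : S.Nonempty) (hd : Disjoint A S) (hA : ∀ a ∈ A, ∀ v, G.Adj a v → v ∈ S) :
    A.card + 2 ≤ 2 * S.card := by
  by_contra hcon
  have : ∀ a : V, ∃ t ⊆ G.neighborFinset a, t.card = 3 := fun a =>
    Finset.exists_subset_card_eq (hdeg a)
  choose T hT hT3 using this
  refine hG (K33Sys.minor S.card (I := S) (B := fun v => {v}) (A := A) (T := T) ?_ rfl hS (by omega))
  refine ⟨fun i _ => conn_singleton G i, fun i _ j _ h => by simpa using h, ?_, ?_, fun a _ => hT3 a, ?_⟩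
  · intro a ha i hi h
    rw [Set.mem_singleton_iff] at h; subst h
    exact Finset.disjoint_left.mp hd ha hi
  · intro a ha i hi
    exact hA a ha i (by simpa using hT a hi)
  · intro a ha i hi
    exact ⟨i, rfl, by simpa using hT a hi⟩

/-- Odd components: `3 o ≤ n + 2 * #isolated`. -/
lemma three_mul_odd_le {W : Type*} [Finite W] (H : SimpleGraph W) :
    3 * H.oddComponents.ncard ≤ Nat.card W + 2 * {w : W | ∀ v, ¬ H.Adj w v}.ncard := by
  classical
  cases nonempty_fintype W
  have hsum : ∑ c : H.ConnectedComponent, c.supp.ncard = Nat.card W := by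
    rw [Nat.card_eq_fintype_card]
    simp only [← (set_fintype_card_eq_univ_iff _).mpr H.iUnion_connectedComponentSupp,
      ← Set.toFinset_card, Set.toFinset_iUnion ConnectedComponent.supp]
    rw [Finset.card_biUnion
      (fun x _ y _ hxy ↦ Set.disjoint_toFinset.mpr (pairwise_disjoint_supp_connectedComponent _ hxy))]
    simp_rw [← Set.ncard_eq_toFinset_card']
  have h1 : H.oddComponents.ncard = (Finset.univ.filter (fun c : H.ConnectedComponent => Odd c.supp.ncard)).card := by
    rw [← Set.ncard_coe_finset]; congr 1; ext c; simp
  have h2 : (Finset.univ.filter (fun c : H.ConnectedComponent => c.supp.ncard = 1)).card ≤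
      {w : W | ∀ v, ¬ H.Adj w v}.ncard := by
    rw [← Set.ncard_coe_finset]
    have hex : ∀ c : H.ConnectedComponent, ∃ w, w ∈ c.supp := fun c => c.nonempty_supp
    choose f hf using hex
    refine Set.ncard_le_ncard_of_injOn f ?_ ?_ (Set.toFinite _)
    · intro c hc v hv
      simp only [Finset.coe_filter, Finset.mem_univ, true_and, Set.mem_ofPred_eq] at hc
      obtain ⟨w, hw⟩ := Set.ncard_eq_one.mp hc
      have h3 := hf c
      have h4 : v ∈ c.supp := by
        rw [ConnectedComponent.mem_supp_iff] at h3 ⊢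
        rw [← h3]; exact (ConnectedComponent.sound hv.reachable).symm
      rw [hw, Set.mem_singleton_iff] at h3 h4
      exact hv.ne (h3.trans h4.symm)
    · intro c _ d _ hcd
      have h3 := hf c
      have h4 := hf d
      rw [ConnectedComponent.mem_supp_iff] at h3 h4
      rw [← h3, ← h4, hcd]
  have h3 : ∑ c : H.ConnectedComponent, (if Odd c.supp.ncard then 3 else 0) ≤
      ∑ c : H.ConnectedComponent, (c.supp.ncard + if c.supp.ncard = 1 then 2 else 0) := by
    refine Finset.sum_le_sum fun c _ => ?_
    split_ifs with ho h h
    · omega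
    · obtain ⟨k, hk⟩ := ho; omega
    · omega
    · omega
  rw [Finset.sum_add_distrib, hsum, ← Finset.sum_filter, ← Finset.sum_filter] at h3
  simp only [Finset.sum_const, smul_eq_mul] at h3
  omega

lemma odd_le_one {W : Type*} [Finite W] (H : SimpleGraph W) (h : H.Preconnected) :
    H.oddComponents.ncard ≤ 1 := by
  have := h.subsingleton_connectedComponent
  exact Set.ncard_le_one_of_subsingleton _

lemma matching_verts_le {V : Type*} [Fintype V] {G : SimpleGraph V} (M : G.Subgraph)
    (hM : M.IsMatching) : M.verts.ncard ≤ 2 * M.edgeSet.ncard := by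
  classical
  have h := M.spanningCoe.sum_degrees_eq_twice_card_edges
  have h1 : M.spanningCoe.edgeFinset.card = M.edgeSet.ncard := by
    rw [← Set.ncard_coe_finset, coe_edgeFinset]; rfl
  have h2 : M.verts.ncard = (Finset.univ.filter (fun v => v ∈ M.verts)).card := by
    rw [← Set.ncard_coe_finset]; congr 1; ext c; simp
  rw [← h1, ← h, h2, Finset.card_filter]
  refine Finset.sum_le_sum fun v _ => ?_
  split_ifs with hv
  · obtain ⟨w, hw, _⟩ := hM hv
    exact (M.spanningCoe.degree_pos_iff_exists_adj v).mpr ⟨w, hw⟩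
  · exact Nat.zero_le _

/-- Join with `d` universal vertices. -/
def joinK {V : Type*} (G : SimpleGraph V) (d : ℕ) : SimpleGraph (V ⊕ Fin d) where
  Adj
    | Sum.inl a, Sum.inl b => G.Adj a b
    | x, y => x ≠ y
  symm := ⟨by rintro (a | a) (b | b) h <;> first | exact SimpleGraph.Adj.symm (G := G) h | exact Ne.symm h⟩
  loopless := ⟨by rintro (a | a) h <;> first | exact G.loopless.irrefl _ h | exact h rfl⟩

lemma joinK_matching {V : Type*} [Fintype V] {G : SimpleGraph V} {d : ℕ}
    (M' : (joinK G d).Subgraph) (hM' : M'.IsPerfectMatching) :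
    ∃ M : G.Subgraph, M.IsMatching ∧ Fintype.card V ≤ 2 * M.edgeSet.ncard + d := by
  classical
  have hp := Subgraph.isPerfectMatching_iff.mp hM'
  let M : G.Subgraph :=
    { verts := {v | ∃ w, M'.Adj (Sum.inl v) (Sum.inl w)}
      Adj := fun v w => M'.Adj (Sum.inl v) (Sum.inl w)
      adj_sub := fun h => M'.adj_sub h
      edge_vert := fun {v w} h => ⟨w, h⟩
      symm := ⟨fun v w h => Subgraph.Adj.symm h⟩ }
  have hM : M.IsMatching := by
    rintro v ⟨w, hw⟩
    refine ⟨w, hw, fun w' hw' => ?_⟩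
    exact Sum.inl_injective ((hp (Sum.inl v)).unique hw' hw)
  refine ⟨M, hM, ?_⟩
  have h1 := matching_verts_le M hM
  have h2 : M.vertsᶜ.ncard ≤ d := by
    have hex : ∀ v : V, ∃ j : V ⊕ Fin d, M'.Adj (Sum.inl v) j := fun v => (hp (Sum.inl v)).exists
    choose f hf using hex
    have : M.vertsᶜ.ncard ≤ (Set.range (Sum.inr : Fin d → V ⊕ Fin d)).ncard := by
      refine Set.ncard_le_ncard_of_injOn f ?_ ?_ (Set.toFinite _)
      · intro v hv
        have := hf v
        rcases hfv : f v with w | j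
        · rw [hfv] at this; exact absurd ⟨w, this⟩ hv
        · exact ⟨j, rfl⟩
      · intro v _ w _ hvw
        have a1 := (hf v).symm
        have a2 := (hf w).symm
        rw [← hvw] at a2
        exact Sum.inl_injective ((hp (f v)).unique a1 a2)
    rw [← Set.image_univ, Set.ncard_image_of_injective _ Sum.inr_injective, Set.ncard_univ] at this
    simpa using this
  have h3 := Set.ncard_add_ncard_compl M.verts
  rw [Nat.card_eq_fintype_card] at h3
  omega

lemma no_violator {V : Type*} [Fintype V] [DecidableEq V]
    (G : SimpleGraph V) [DecidableRel G.Adj]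
    (hG : G.IsPlanar) (hconn : G.Connected) (hdeg : ∀ v : V, 3 ≤ G.degree v) (m d : ℕ)
    (hd : Fintype.card V = 2 * m + d) (hm : 3 * m ≤ Fintype.card V + 4) (u : Set (V ⊕ Fin d)) :
    ¬ (joinK G d).IsTutteViolator u := by
  classical
  intro hv
  unfold IsTutteViolator at hv
  set H := ((⊤ : (joinK G d).Subgraph).deleteVerts u).coe with hH
  have hmem : ∀ x, x ∈ ((⊤ : (joinK G d).Subgraph).deleteVerts u).verts ↔ x ∉ u := by
    intro x; simp
  have hadj : ∀ x y, H.Adj x y ↔ (joinK G d).Adj x.1 y.1 := by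
    intro x y
    have h1 := (hmem _).mp x.2
    have h2 := (hmem _).mp y.2
    simp [hH, h1, h2]
  have hcardH : Nat.card ((⊤ : (joinK G d).Subgraph).deleteVerts u).verts + u.ncard
      = Fintype.card V + d := by
    have e : ((⊤ : (joinK G d).Subgraph).deleteVerts u).verts = uᶜ := by ext x; simp
    rw [e, Nat.card_coe_set_eq]
    have := Set.ncard_add_ncard_compl u
    simp at this
    omega
  have hpar := H.odd_ncard_oddComponents
  have hpar2 : u.ncard + 2 ≤ H.oddComponents.ncard := by
    rcases Nat.even_or_odd (H.oddComponents.ncard) with he | ho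
    · have h1 : ¬ Odd (Nat.card ((⊤ : (joinK G d).Subgraph).deleteVerts u).verts) := by
        rw [← hpar, Nat.not_odd_iff_even]; exact he
      rw [Nat.not_odd_iff_even] at h1
      obtain ⟨p, hp⟩ := he
      obtain ⟨q, hq⟩ := h1
      omega
    · have h1 := hpar.mp ho
      obtain ⟨p, hp⟩ := ho
      obtain ⟨q, hq⟩ := h1
      omega
  have hnp : ¬ H.Preconnected := fun h => by have := odd_le_one H h; omega
  have hall : ∀ j : Fin d, Sum.inr j ∈ u := by
    by_contra! hj
    obtain ⟨j, hj⟩ := hj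
    apply hnp
    let J : ((⊤ : (joinK G d).Subgraph).deleteVerts u).verts := ⟨Sum.inr j, (hmem _).mpr hj⟩
    have hJ : ∀ x, H.Reachable x J := by
      intro x
      by_cases hx : x = J
      · rw [hx]
      · apply Adj.reachable
        rw [hadj]
        have hne : x.1 ≠ Sum.inr j := fun h => hx (Subtype.ext h)
        rcases hx1 : x.1 with w | w
        · exact (by simp : (Sum.inl w : V ⊕ Fin d) ≠ Sum.inr j)
        · rw [hx1] at hne; exact hne
    exact fun x y => (hJ x).trans (hJ y).symm
  let S : Finset V := Finset.univ.filter (fun v => (Sum.inl v : V ⊕ Fin d) ∈ u)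
  have hu : u.ncard = S.card + d := by
    have e : u = Sum.inl '' (S : Set V) ∪ Set.range Sum.inr := by
      ext x
      rcases x with v | j
      · simp [S]
      · simp [hall j]
    rw [e, Set.ncard_union_eq, Set.ncard_image_of_injective _ Sum.inl_injective, Set.ncard_coe_finset,
      ← Set.image_univ, Set.ncard_image_of_injective _ Sum.inr_injective, Set.ncard_univ]
    · simp
    · rw [Set.disjoint_left]; rintro _ ⟨v, _, rfl⟩ ⟨j, hj⟩; simp at hj
  have hS : S.Nonempty := by
    by_contra hS
    rw [Finset.not_nonempty_iff_eq_empty] at hS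
    have hinl : ∀ v : V, (Sum.inl v : V ⊕ Fin d) ∉ u := by
      intro v h
      have : v ∈ S := by simp [S, h]
      simp [hS] at this
    apply hnp
    let φ : G →g H :=
      { toFun := fun v => ⟨Sum.inl v, (hmem _).mpr (hinl v)⟩
        map_rel' := fun {a b} h => (hadj _ _).mpr h }
    rintro ⟨x, hx⟩ ⟨y, hy⟩
    rcases x with x | j
    · rcases y with y | j
      · exact (hconn.preconnected x y).map φ
      · exact absurd (hall j) ((hmem _).mp hy)
    · exact absurd (hall j) ((hmem _).mp hx)
  let A : Finset V := Finset.univ.filter (fun v => v ∉ S ∧ ∀ w, G.Adj v w → w ∈ S)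
  have hA := indep_bound G hG.2 hdeg S A hS
    (by rw [Finset.disjoint_left]; intro a ha; exact (Finset.mem_filter.mp ha).2.1)
    (by intro a ha; exact (Finset.mem_filter.mp ha).2.2)
  have h3 := three_mul_odd_le H
  have hiso : {w | ∀ v, ¬ H.Adj w v}.ncard ≤ A.card := by
    rw [← Set.ncard_coe_finset, ← Set.ncard_image_of_injective (A : Set V) (Sum.inl_injective (β := Fin d))]
    refine Set.ncard_le_ncard_of_injOn Subtype.val ?_ Subtype.val_injective.injOn (Set.toFinite _)
    rintro ⟨x, hx⟩ hx2
    rcases x with x | j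
    · refine ⟨x, ?_, rfl⟩
      have hxu := (hmem _).mp hx
      simp only [A, Finset.coe_filter, Finset.mem_univ, true_and, Set.mem_ofPred_eq]
      refine ⟨by simpa [S] using hxu, fun w hw => ?_⟩
      by_contra hwS
      have hwu : (Sum.inl w : V ⊕ Fin d) ∉ u := by simpa [S] using hwS
      exact hx2 ⟨Sum.inl w, (hmem _).mpr hwu⟩ ((hadj _ _).mpr hw)
    · exact absurd (hall j) ((hmem _).mp hx)
  omega

/-- Nishizeki–Baybars: every connected planar graph with `n ≥ 10` vertices and
minimum degree at least 3 contains a matching of size at least `⌈(n + 2)/3⌉`. -/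
theorem stmt_19 {V : Type*} [Fintype V] [DecidableEq V]
    (G : SimpleGraph V) [DecidableRel G.Adj]
    (hG : G.IsPlanar) (hconn : G.Connected)
    (hn : 10 ≤ Fintype.card V) (hdeg : ∀ v : V, 3 ≤ G.degree v) :
    ∃ M : G.Subgraph, M.IsMatching ∧
      ⌈((Fintype.card V : ℝ) + 2) / 3⌉₊ ≤ M.edgeSet.ncard := by
  obtain ⟨M', hM'⟩ := (tutte (G := joinK G (Fintype.card V - 2 * ((Fintype.card V + 4) / 3)))).mpr
    (no_violator G hG hconn hdeg ((Fintype.card V + 4) / 3) _ (by omega) (by omega))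
  obtain ⟨M, hM, hc⟩ := joinK_matching M' hM'
  refine ⟨M, hM, ?_⟩
  rw [Nat.ceil_le, div_le_iff₀ (by norm_num)]
  have : Fintype.card V + 2 ≤ M.edgeSet.ncard * 3 := by omega
  exact_mod_cast this
end
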